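/- arXiv:2108.07723 — 12 statements merged into one kernel-verified Lean document; each statement's English description precedes it below -/
import Mathlib

section
/- For every positive integer n and every element q of a commutative ring, the permanent of the n×n matrix whose (j,k)-entry (for 1 ≤ j,k ≤ n) is [⌊(j+k)/n⌋]_q equals 2^{n-1} + q. -/
/-!
Reversing the order of the rows turns the matrix into a Hessenberg matrix of ones (entry `1` where
`k ≤ j + 1`, and `0` elsewhere) except that the entry in row `0` and the last column is `1 + q`.
Write `F n q` for its permanent. Column `0` is supported on rows `0` and `1`. Deleting column `0`
together with row `0` leaves the same matrix of size `n - 1` with `q = 0`, and deleting column `0`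
together with row `1` leaves the same matrix of size `n - 1` with the same `q`. Hence
`F n q = F (n - 1) 0 + F (n - 1) q` with `F 1 q = 1 + q`, so that `F n q = 2 ^ (n - 1) + q`.
-/

/-- The row-reversed matrix: ones where `k ≤ j + 1`, with `1 + q` in row `0` of the last column,
all indices counted from `0`. -/
def hessenbergCorner {R : Type*} [CommRing R] (n : ℕ) (q : R) : Matrix (Fin n) (Fin n) R :=
  Matrix.of fun k j =>
    if (k : ℕ) = 0 ∧ (j : ℕ) + 1 = n then 1 + q else if (k : ℕ) ≤ j + 1 then 1 else 0

/-- Expansion along column `0`: the permutations with `σ 0 = 0` and with `σ 0 = 1` contribute the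
two summands. -/
theorem permanent_hessenbergCorner_succ {R : Type*} [CommRing R] (n : ℕ) (q : R) :
    (hessenbergCorner (n + 2) q).permanent
      = (hessenbergCorner (n + 1) (0 : R)).permanent + (hessenbergCorner (n + 1) q).permanent := by
  unfold Matrix.permanent
  rw [← Equiv.sum_comp Equiv.Perm.decomposeFin.symm, Fintype.sum_prod_type, Fin.sum_univ_succ,
    Fin.sum_univ_succ]
  have hrest : ∑ p : Fin n, ∑ e : Equiv.Perm (Fin (n + 1)), ∏ i, hessenbergCorner (n + 2) q
      (Equiv.Perm.decomposeFin.symm (p.succ.succ, e) i) i = 0 := by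
    refine Finset.sum_eq_zero fun p _ => Finset.sum_eq_zero fun e _ => ?_
    refine Finset.prod_eq_zero (Finset.mem_univ 0) ?_
    simp [hessenbergCorner]
  rw [hrest, add_zero]
  congr 1
  · refine Finset.sum_congr rfl fun e _ => ?_
    rw [Fin.prod_univ_succ]
    simp [hessenbergCorner]
    refine Finset.prod_congr rfl fun j _ => ?_
    split_ifs <;> first | rfl | omega
  · refine Finset.sum_congr rfl fun e _ => ?_
    rw [Fin.prod_univ_succ]
    have h0 : hessenbergCorner (n + 2) q
        (Equiv.Perm.decomposeFin.symm (Fin.succ 0, e) 0) 0 = 1 := by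
      simp [hessenbergCorner]
    rw [h0, one_mul]
    refine Finset.prod_congr rfl fun j _ => ?_
    rw [Equiv.Perm.decomposeFin_symm_apply_succ]
    by_cases h : e j = 0
    · rw [h, Equiv.swap_apply_right]
      simp [hessenbergCorner]
    · rw [Equiv.swap_apply_of_ne_of_ne (Fin.succ_ne_zero _) (fun h' => h (Fin.succ_injective _ h'))]
      simp [hessenbergCorner, h]

theorem permanent_hessenbergCorner {R : Type*} [CommRing R] (n : ℕ) (q : R) :
    (hessenbergCorner (n + 1) q).permanent = 2 ^ n + q := by
  induction n generalizing q with
  | zero => simp [Matrix.permanent, hessenbergCorner]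
  | succ n ih =>
    rw [permanent_hessenbergCorner_succ, ih, ih]
    ring

/-- For every positive integer `n` and every element `q` of a commutative ring, the permanent of
the `n × n` matrix whose `(j,k)`-entry (for `1 ≤ j, k ≤ n`) is the `q`-analogue
`[⌊(j + k) / n⌋]_q = 1 + q + ⋯ + q^(⌊(j+k)/n⌋ - 1)` equals `2 ^ (n - 1) + q`. -/
theorem permanent_qAnalogue_floor_add_div {R : Type*} [CommRing R] (n : ℕ) (hn : 0 < n) (q : R) :
    (Matrix.of fun j k : Fin n =>
      ∑ i ∈ Finset.range ((((j : ℕ) + 1) + ((k : ℕ) + 1)) / n), q ^ i).permanent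
      = 2 ^ (n - 1) + q := by
  obtain ⟨m, rfl⟩ : ∃ m, n = m + 1 := ⟨n - 1, by omega⟩
  rw [Nat.add_sub_cancel, ← permanent_hessenbergCorner m q,
    ← Matrix.permanent_permute_cols Fin.revPerm]
  congr 1
  ext k j
  have hk := k.isLt
  have hj := j.isLt
  simp only [Matrix.submatrix_apply, Matrix.of_apply, id, Fin.revPerm_apply, Fin.val_rev,
    hessenbergCorner]
  split_ifs with h1 h2
  · have h : (m + 1 - ((k : ℕ) + 1) + 1 + (j + 1)) / (m + 1) = 2 := by
      rw [Nat.div_eq_iff (by omega)]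
      omega
    rw [h]
    simp [Finset.sum_range_succ]
  · have h : (m + 1 - ((k : ℕ) + 1) + 1 + (j + 1)) / (m + 1) = 1 := by
      rw [Nat.div_eq_iff (by omega)]
      omega
    rw [h]
    simp
  · rw [Nat.div_eq_of_lt (by omega)]
    simp
end

section
/- Let n be a positive integer, let F be a field, let ζ ∈ F be a primitive n-th root of unity, and let x_1,…,x_n ∈ F. Then the permanent of the n×n matrix with (j,k)-entry 1 − ζ^j·x_k (for 1 ≤ j,k ≤ n) equals n!·(1 − x_1·x_2⋯x_n), where n! denotes the image of the integer n! in F. -/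
/-!
Write `w j = -ζ ^ (j + 1)`. Expanding each product `∏ i, (1 + w (σ i) * x i)` over subsets `S` of
the columns, the permanent becomes `∑ S, c S * ∏ i ∈ S, x i` with
`c S = ∑ σ, ∏ i ∈ S, w (σ i)`. Composing `σ` with the cyclic shift of the rows multiplies every
`w (σ i)` by `ζ`, so `c S = ζ ^ #S * c S`, and hence `c S = 0` unless `#S` is `0` or `n`. Finally
`c ∅ = n!`, and `c univ = n! * ∏ j, w j = -n!` by evaluating `X ^ n - 1 = ∏ j, (X - ζ ^ j)` at `0`.
-/

open Finset

theorem prod_neg_primitiveRoot_pow_succ {F : Type*} [Field F] {n : ℕ} (hn : 0 < n)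
    {ζ : F} (hζ : IsPrimitiveRoot ζ n) : ∏ j : Fin n, (-ζ ^ ((j : ℕ) + 1)) = -1 := by
  have h := congrArg (Polynomial.eval 0) (X_pow_sub_C_eq_prod hζ hn hζ.pow_eq_one)
  simp only [Polynomial.eval_prod, Polynomial.eval_sub, Polynomial.eval_pow, Polynomial.eval_X,
    Polynomial.eval_C, zero_pow hn.ne', zero_sub, ← pow_succ] at h
  rw [h, Fin.prod_univ_eq_prod_range (fun j => -ζ ^ (j + 1)) n]

theorem primitiveRoot_pow_finRotate {F : Type*} [Field F] {n : ℕ}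
    {ζ : F} (hζ : IsPrimitiveRoot ζ n) (j : Fin n) :
    ζ ^ ((finRotate n j : ℕ) + 1) = ζ * ζ ^ ((j : ℕ) + 1) := by
  obtain _ | m := n
  · exact j.elim0
  · have hmod (k : ℕ) : ζ ^ (k % (m + 1)) = ζ ^ k := by
      rw [hζ.eq_orderOf, pow_mod_orderOf]
    rw [finRotate_apply, pow_succ', Fin.val_add, hmod]
    rcases m with _ | m
    · have : ζ = 1 := by simpa using hζ.pow_eq_one
      simp [this]
    · simp

/-- The coefficient of `∏ i ∈ S, x i` in the expanded permanent vanishes when `S` is neither empty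
nor everything, by invariance under the cyclic shift of the rows. -/
theorem sum_perm_prod_neg_primitiveRoot_pow_eq_zero {F : Type*} [Field F] {n : ℕ}
    {ζ : F} (hζ : IsPrimitiveRoot ζ n) (S : Finset (Fin n)) (h0 : S ≠ ∅) (h1 : S ≠ univ) :
    ∑ σ : Equiv.Perm (Fin n), ∏ i ∈ S, (-ζ ^ ((σ i : ℕ) + 1)) = 0 := by
  have key : ∑ σ : Equiv.Perm (Fin n), ∏ i ∈ S, (-ζ ^ ((σ i : ℕ) + 1)) =
      ζ ^ #S * ∑ σ : Equiv.Perm (Fin n), ∏ i ∈ S, (-ζ ^ ((σ i : ℕ) + 1)) := by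
    conv_lhs => rw [← (Group.mulLeft_bijective (finRotate n)).sum_comp]
    rw [mul_sum]
    refine sum_congr rfl fun σ _ => ?_
    rw [← prod_const, ← prod_mul_distrib]
    refine prod_congr rfl fun i _ => ?_
    rw [Equiv.Perm.mul_apply, primitiveRoot_pow_finRotate hζ, mul_neg]
  have hlt : #S < n := by simpa using (card_lt_iff_ne_univ S).2 h1
  have hne : ζ ^ #S ≠ 1 :=
    hζ.pow_ne_one_of_pos_of_lt (card_ne_zero.2 (nonempty_iff_ne_empty.2 h0)) hlt
  by_contra hc
  exact hne (mul_right_cancel₀ hc (by rw [one_mul, ← key]))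

/-- Let `ζ` be a primitive `n`-th root of unity in a field `F` and let `x 1, …, x n ∈ F`.
Then `per [1 - ζ^j * x k]_{1 ≤ j,k ≤ n} = n! * (1 - x 1 * ⋯ * x n)`. -/
theorem permanent_one_sub_primitiveRoot_pow_mul {F : Type*} [Field F] (n : ℕ) (hn : 0 < n)
    (ζ : F) (hζ : IsPrimitiveRoot ζ n) (x : Fin n → F) :
    (Matrix.of fun j k : Fin n => 1 - ζ ^ ((j : ℕ) + 1) * x k).permanent
      = (Nat.factorial n : F) * (1 - ∏ k, x k) := by
  have : NeZero n := ⟨hn.ne'⟩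
  have hexp : (Matrix.of fun j k : Fin n => 1 - ζ ^ ((j : ℕ) + 1) * x k).permanent =
      ∑ S : Finset (Fin n),
        (∑ σ : Equiv.Perm (Fin n), ∏ i ∈ S, (-ζ ^ ((σ i : ℕ) + 1))) * ∏ i ∈ S, x i := by
    simp only [Matrix.permanent, Matrix.of_apply, sub_eq_add_neg, ← neg_mul, prod_one_add,
      powerset_univ, prod_mul_distrib, sum_mul]
    exact sum_comm
  have hne : (∅ : Finset (Fin n)) ≠ univ := univ_nonempty.ne_empty.symm
  have huniv : ∑ σ : Equiv.Perm (Fin n), ∏ i, (-ζ ^ ((σ i : ℕ) + 1)) = -(Nat.factorial n : F) := by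
    have h (σ : Equiv.Perm (Fin n)) : ∏ i, (-ζ ^ ((σ i : ℕ) + 1)) = -1 := by
      rw [σ.prod_comp univ (fun j : Fin n => -ζ ^ ((j : ℕ) + 1)) (by simp),
        prod_neg_primitiveRoot_pow_succ hn hζ]
    simp [h, Fintype.card_perm]
  rw [hexp, Fintype.sum_eq_add ∅ univ hne fun S hS => by
    rw [sum_perm_prod_neg_primitiveRoot_pow_eq_zero hζ S hS.1 hS.2, zero_mul], huniv]
  simp only [prod_empty, sum_const, card_univ, Fintype.card_perm, Fintype.card_fin, nsmul_eq_mul]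
  ring
end

section
/- Let n > 1 be an integer, let F be a field, let ζ ∈ F be a primitive n-th root of unity, and let x ∈ F. Then the permanent of the (n−1)×(n−1) matrix with (j,k)-entry 1 + ζ^{j+k}·x (for 1 ≤ j,k ≤ n−1) equals ∑_{k=0}^{n-1} ((n−1)!/binom(n−1,k))·x^k, where each coefficient (n−1)!/binom(n−1,k) = k!·(n−1−k)! is an integer and is interpreted via its image in F. -/
/-!
For any `a b : ι → R` with `|ι| = m`, expanding the product over each permutation gives
`per [1 + a_j b_k x] = ∑_k k! (m-k)! e_k(a) e_k(b) x^k`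
(`permanent_one_add_mul_mul`): a set `T` of `k` columns contributes `∏_{i ∈ T} b_i` times
`∑_σ ∏_{i ∈ T} a_{σ i}`, and each `k`-subset `S` equals `σ(T)` for exactly `k! (m-k)!`
permutations `σ` (`card_perm_map_eq`). For `a_j = b_j = ζ^j`, `1 ≤ j ≤ n-1`, the identity
`∏_{0 ≤ j < n} (1 + ζ^j X) = 1 - (-X)^n` divided by `1 + X` shows `e_k = (-1)^k`
(`esymm_primitiveRoot`), so `e_k(a) e_k(b) = 1`.
-/

open Finset in
/-- All fibres of `σ ↦ σ(T)` over the sets of size `|T|` are equinumerous, because they are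
translates of each other; hence each has `m! / (m choose |T|)` elements. -/
theorem card_perm_map_eq {ι : Type*} [Fintype ι] [DecidableEq ι] (S T : Finset ι)
    (h : S.card = T.card) :
    ({σ : Equiv.Perm ι | T.map σ.toEmbedding = S} : Finset _).card
      = T.card.factorial * (Fintype.card ι - T.card).factorial := by
  have key : ∀ S' ∈ powersetCard T.card (univ : Finset ι),
      ({σ : Equiv.Perm ι | T.map σ.toEmbedding = S'} : Finset _).card
        = ({σ : Equiv.Perm ι | T.map σ.toEmbedding = S} : Finset _).card := by
    intro S' hS'
    have hc : S'.card = S.card := by rw [(mem_powersetCard.1 hS').2, h]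
    let τ : Equiv.Perm ι := (Finset.equivOfCardEq hc).extendSubtype
    have hτ : S'.map τ.toEmbedding = S := by
      apply eq_of_subset_of_card_le
      · intro y hy
        obtain ⟨z, hz, rfl⟩ := mem_map.1 hy
        exact (Finset.equivOfCardEq hc).extendSubtype_mem z hz
      · simp [hc]
    apply card_bijective (fun σ => τ * σ) (Group.mulLeft_bijective τ)
    intro σ
    have e : T.map (τ * σ).toEmbedding = (T.map σ.toEmbedding).map τ.toEmbedding := by
      rw [map_map]; rfl
    simp only [mem_filter, mem_univ, true_and]
    rw [e, ← hτ, map_inj]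
  have total := card_eq_sum_card_fiberwise (s := (univ : Finset (Equiv.Perm ι)))
    (t := powersetCard T.card univ) (f := fun σ => T.map σ.toEmbedding) (by
      intro σ _
      simp [mem_powersetCard])
  rw [sum_congr rfl key, sum_const, card_powersetCard, card_univ, card_univ, Fintype.card_perm,
    smul_eq_mul, ← Nat.choose_mul_factorial_mul_factorial (card_le_univ T), mul_assoc] at total
  exact (Nat.eq_of_mul_eq_mul_left (Nat.choose_pos (card_le_univ T)) total).symm

open Finset in
theorem sum_perm_prod {ι R : Type*} [Fintype ι] [DecidableEq ι] [CommRing R] (a : ι → R)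
    (T : Finset ι) :
    ∑ σ : Equiv.Perm ι, ∏ i ∈ T, a (σ i)
      = ((T.card.factorial * (Fintype.card ι - T.card).factorial : ℕ) : R)
        * ∑ S ∈ powersetCard T.card univ, ∏ i ∈ S, a i := by
  have h1 : ∀ σ ∈ (univ : Finset (Equiv.Perm ι)),
      T.map σ.toEmbedding ∈ powersetCard T.card (univ : Finset ι) := by
    intro σ _
    simp [mem_powersetCard]
  rw [← sum_fiberwise_of_maps_to h1, mul_sum]
  refine sum_congr rfl fun S hS => ?_
  rw [← card_perm_map_eq S T (mem_powersetCard.1 hS).2, ← nsmul_eq_mul, ← sum_const]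
  refine sum_congr rfl fun σ hσ => ?_
  rw [← (mem_filter.1 hσ).2, prod_map]
  rfl

open Finset in
/-- The permanent of a rank-one perturbation of the all-ones matrix, in terms of the elementary
symmetric functions of the two vectors. -/
theorem permanent_one_add_mul_mul {ι R : Type*} [Fintype ι] [DecidableEq ι] [CommRing R]
    (a b : ι → R) (x : R) :
    (Matrix.of fun j k => 1 + a j * b k * x).permanent
      = ∑ k ∈ range (Fintype.card ι + 1),
          ((k.factorial * (Fintype.card ι - k).factorial : ℕ) : R)
            * (∑ S ∈ powersetCard k univ, ∏ i ∈ S, a i)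
            * (∑ S ∈ powersetCard k univ, ∏ i ∈ S, b i) * x ^ k := by
  simp only [Matrix.permanent, Matrix.of_apply, prod_one_add, prod_mul_distrib, prod_const]
  rw [sum_comm, sum_powerset, card_univ]
  refine sum_congr rfl fun k _ => ?_
  rw [mul_sum, sum_mul]
  refine sum_congr rfl fun T hT => ?_
  rw [← sum_mul, ← sum_mul, sum_perm_prod, (mem_powersetCard.1 hT).2]

open Finset Polynomial in
/-- The `k`-th elementary symmetric function of `ζ, ζ², …, ζ^(n-1)` is `(-1)^k`. -/
theorem esymm_primitiveRoot {F : Type*} [Field F] (n : ℕ) (hn : 1 < n) (ζ : F)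
    (hζ : IsPrimitiveRoot ζ n) (k : ℕ) (hk : k < n) :
    ∑ S ∈ powersetCard k (univ : Finset (Fin (n - 1))), ∏ i ∈ S, ζ ^ ((i : ℕ) + 1)
      = (-1) ^ k := by
  classical
  obtain ⟨m, rfl⟩ : ∃ m, n = m + 1 := ⟨n - 1, by omega⟩
  change ∑ S ∈ powersetCard k (univ : Finset (Fin m)), ∏ i ∈ S, ζ ^ ((i : ℕ) + 1) = (-1) ^ k
  have hζ' : IsPrimitiveRoot (C ζ : F[X]) (m + 1) := hζ.map_of_injective C_injective
  have h1 : (1 : F[X]) - (-X) ^ (m + 1) = ∏ i ∈ range (m + 1), (1 + C (ζ ^ i) * X) := by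
    have := hζ'.pow_sub_pow_eq_prod_sub_mul 1 (-X) (Nat.succ_pos m)
    rw [one_pow] at this
    rw [this, nthRootsFinset_def, Finset.prod_eq_multiset_prod, Finset.prod_eq_multiset_prod,
      Multiset.toFinset_val,
      Multiset.dedup_eq_self.2 (hζ'.nthRoots_one_nodup), hζ'.nthRoots_eq (one_pow _),
      Multiset.map_map]
    simp
  have h2 : ∏ i : Fin m, (1 + C (ζ ^ ((i : ℕ) + 1)) * X) = ∑ i ∈ range (m + 1), (-X : F[X]) ^ i := by
    rw [← mul_neg_geom_sum, prod_range_succ', mul_comm] at h1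
    have h3 : (1 : F[X]) - -X ≠ 0 := by
      rw [sub_neg_eq_add, add_comm]
      exact (monic_X_add_C (1 : F)).ne_zero
    rw [Fin.prod_univ_eq_prod_range (fun i => 1 + C (ζ ^ (i + 1)) * X)]
    apply mul_right_cancel₀ h3
    rw [h1]
    simp
  have h4 := congrArg (fun p => coeff p k) h2
  simp only [prod_one_add, prod_mul_distrib, prod_const, ← map_prod, finsetSum_coeff,
    coeff_C_mul, coeff_X_pow, neg_pow (X : F[X])] at h4
  have h5 : ∀ i, ((-1 : F[X]) ^ i * X ^ i).coeff k = if k = i then (-1) ^ k else 0 := by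
    intro i
    rw [show (-1 : F[X]) ^ i = C ((-1) ^ i) by simp, coeff_C_mul, coeff_X_pow]
    split_ifs with h <;> simp [h]
  simp only [h5, sum_ite_eq, mem_range, hk, if_true, mul_ite, mul_one, mul_zero] at h4
  rw [← h4, ← sum_filter]
  refine sum_congr ?_ fun _ _ => rfl
  ext S
  simp [mem_powersetCard, eq_comm]

/-- Let `n > 1`, let `ζ` be a primitive `n`-th root of unity in a field `F`, and let `x ∈ F`.
Then `per [1 + ζ^(j+k) * x]_{1 ≤ j,k ≤ n-1} = ∑_{k=0}^{n-1} k! * (n-1-k)! * x^k`,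
where `k! * (n-1-k)! = (n-1)! / binom(n-1,k)`. -/
theorem permanent_one_add_primitiveRoot_pow_add_mul {F : Type*} [Field F] (n : ℕ) (hn : 1 < n)
    (ζ : F) (hζ : IsPrimitiveRoot ζ n) (x : F) :
    (Matrix.of fun j k : Fin (n - 1) =>
        1 + ζ ^ (((j : ℕ) + 1) + ((k : ℕ) + 1)) * x).permanent
      = ∑ k ∈ Finset.range n,
          ((Nat.factorial k * Nat.factorial (n - 1 - k) : ℕ) : F) * x ^ k := by
  simp only [pow_add ζ (_ + 1) (_ + 1)]
  rw [permanent_one_add_mul_mul (fun j : Fin (n - 1) => ζ ^ ((j : ℕ) + 1))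
    (fun j : Fin (n - 1) => ζ ^ ((j : ℕ) + 1)), Fintype.card_fin, Nat.sub_add_cancel hn.le]
  refine Finset.sum_congr rfl fun k hk => ?_
  rw [esymm_primitiveRoot n hn ζ hζ k (Finset.mem_range.1 hk), mul_assoc _ ((-1 : F) ^ k) ((-1) ^ k),
    ← mul_pow]
  simp
end

section
/- Let p be an odd prime and let x_1,…,x_{p-1} be integers. Then the permanent of the (p−1)×(p−1) integer matrix with (j,k)-entry j + x_k (for 1 ≤ j,k ≤ p−1) is congruent to 1 − x_1·x_2⋯x_{p-1} modulo p. -/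
/-!
Work in `ZMod p`, where the row labels `1, …, p - 1` run through all the units. Expanding each
product `∏ k, (σ k + x k)` over subsets `S` of the columns, the permanent becomes
`∑ S, c S * ∏ k ∉ S, x k` with `c S = ∑ σ, ∏ k ∈ S, σ k`, the sum ranging over all bijections `σ`
from the columns to the units. Multiplying `σ` by a fixed unit `g` permutes these bijections, so
`c S = g ^ |S| * c S`; if `0 < |S| < p - 1`, some `g` has `g ^ |S| ≠ 1`, whence `c S = 0`
(`sum_prod_units_eq_zero`). By Wilson's theorem the two extreme coefficients are
`c ∅ = (p - 1)! = -1` and `c univ = (p - 1)! * (p - 1)! = 1`.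
-/

open Finset

/-- The coefficients `c S` with `0 < |S| < p - 1` vanish: they are invariant under scaling by
`g ^ |S|` for every unit `g`. -/
lemma sum_prod_units_eq_zero {p : ℕ} [Fact p.Prime] {n : Type*} [Fintype n] [DecidableEq n]
    (e : n ≃ (ZMod p)ˣ) (S : Finset n) (h0 : S ≠ ∅) (h1 : S ≠ univ) :
    ∑ σ : Equiv.Perm n, ∏ k ∈ S, (e (σ k) : ZMod p) = 0 := by
  have hcard : Fintype.card n = p - 1 := by
    rw [Fintype.card_congr e, ZMod.card_units]
  have hlt : #S < p - 1 := hcard ▸ (Finset.card_lt_iff_ne_univ S).2 h1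
  have hpos : 0 < #S := Finset.card_pos.2 (Finset.nonempty_iff_ne_empty.2 h0)
  obtain ⟨g, hg⟩ : ∃ g : (ZMod p)ˣ, g ^ #S ≠ 1 := by
    by_contra! h
    have := (FiniteField.forall_pow_eq_one_iff (ZMod p) #S).1 h
    rw [ZMod.card] at this
    exact absurd (Nat.le_of_dvd hpos this) (not_le.2 hlt)
  -- multiplication by `g`, transported to the index type
  let π : Equiv.Perm n := (e.trans (Equiv.mulLeft g)).trans e.symm
  have key : ∑ σ : Equiv.Perm n, ∏ k ∈ S, (e (σ k) : ZMod p)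
      = (g : ZMod p) ^ #S * ∑ σ : Equiv.Perm n, ∏ k ∈ S, (e (σ k) : ZMod p) := by
    conv_lhs => rw [← Equiv.sum_comp (Equiv.mulLeft π)]
    simp [π, Finset.mul_sum, Finset.prod_mul_distrib]
  have hg' : (g : ZMod p) ^ #S ≠ 1 := fun h => hg (Units.ext (by simpa using h))
  by_contra hne
  exact hg' (mul_right_cancel₀ hne (by rw [one_mul]; exact key.symm))

lemma permanent_units_add {p : ℕ} [Fact p.Prime] {n : Type*} [Fintype n] [DecidableEq n]
    (e : n ≃ (ZMod p)ˣ) (y : n → ZMod p) :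
    (Matrix.of fun j k : n => (e j : ZMod p) + y k).permanent = 1 - ∏ k, y k := by
  have hcard : Fintype.card n = p - 1 := by
    rw [Fintype.card_congr e, ZMod.card_units]
  have hperm : ((Fintype.card (Equiv.Perm n) : ℕ) : ZMod p) = -1 := by
    rw [Fintype.card_perm, hcard, ZMod.wilsons_lemma]
  have hprod : ∏ k, (e k : ZMod p) = -1 := by
    rw [Equiv.prod_comp e (fun u => (u : ZMod p)), ← Units.coe_prod,
      FiniteField.prod_univ_units_id_eq_neg_one]
    simp
  haveI : Nonempty n := ⟨e.symm 1⟩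
  have hexp : (Matrix.of fun j k : n => (e j : ZMod p) + y k).permanent
      = ∑ S : Finset n, (∑ σ : Equiv.Perm n, ∏ k ∈ S, (e (σ k) : ZMod p)) *
          ∏ k ∈ univ \ S, y k := by
    simp only [Matrix.permanent, Matrix.of_apply, Finset.prod_add, Finset.powerset_univ]
    rw [Finset.sum_comm]
    simp only [Finset.sum_mul]
  rw [hexp, Fintype.sum_eq_add (univ : Finset n) ∅ Finset.univ_nonempty.ne_empty]
  · have hσ : ∀ σ : Equiv.Perm n, ∏ k, (e (σ k) : ZMod p) = -1 := fun σ => by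
      rw [Equiv.prod_comp σ (fun k => (e k : ZMod p)), hprod]
    simp only [hσ, Finset.sum_const, Finset.card_univ, nsmul_eq_mul, hperm, Finset.prod_empty,
      Finset.sdiff_self, Finset.sdiff_empty]
    ring
  · rintro S ⟨h1, h0⟩
    rw [sum_prod_units_eq_zero e S h0 h1, zero_mul]

/-- Let `p` be an odd prime and let `x 1, …, x (p-1)` be integers. Then
`per [j + x k]_{1 ≤ j,k ≤ p-1} ≡ 1 - x 1 * ⋯ * x (p-1) (mod p)`. -/
theorem permanent_add_int_mod_p (p : ℕ) (hp : p.Prime) (hodd : Odd p) (x : Fin (p - 1) → ℤ) :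
    (Matrix.of fun j k : Fin (p - 1) => ((j : ℕ) + 1 : ℤ) + x k).permanent
      ≡ 1 - ∏ k, x k [ZMOD (p : ℤ)] := by
  haveI : Fact p.Prime := ⟨hp⟩
  have hne : ∀ j : Fin (p - 1), (((j : ℕ) + 1 : ℕ) : ZMod p) ≠ 0 := fun j h => by
    have := Nat.le_of_dvd (Nat.succ_pos _) ((ZMod.natCast_eq_zero_iff _ _).1 h)
    have := j.2
    omega
  have hbij : Function.Bijective fun j : Fin (p - 1) => Units.mk0 _ (hne j) := by
    rw [Fintype.bijective_iff_injective_and_card]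
    refine ⟨fun i j hij => ?_, by rw [ZMod.card_units, Fintype.card_fin]⟩
    have h : (((i : ℕ) + 1 : ℕ) : ZMod p) = (((j : ℕ) + 1 : ℕ) : ZMod p) :=
      congrArg Units.val hij
    rw [ZMod.natCast_eq_natCast_iff] at h
    have := Nat.ModEq.eq_of_lt_of_lt h (by have := i.2; omega) (by have := j.2; omega)
    exact Fin.ext (by omega)
  have h := permanent_units_add (Equiv.ofBijective _ hbij) (fun k => (x k : ZMod p))
  rw [← ZMod.intCast_eq_intCast_iff]
  simpa [Matrix.permanent] using h
end

section
/- Let p be an odd prime and let d be an integer not divisible by p. Then the permanent of the (p−1)×(p−1) integer matrix with (j,k)-entry j + d·k (for 1 ≤ j,k ≤ p−1) satisfies per[j+dk]_{1≤j,k≤p−1} ≡ d^{p-1} − 3 − 4·(p−1)! (mod p²). -/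
/-!
Write `n = p - 1` and `x i = i + 1`, so that `x` runs over `1, …, p - 1`. Expanding each product
in the permanent over the set `T` of positions at which the row term is chosen gives
`∑ T, c T * ∏ i ∉ T, d * x i`, where `c T = ∑ σ, ∏ i ∈ T, x (σ i)`; this `c T` depends only on the
cardinality of `T`. Hence the terms with `|T| = r` contribute
`c_r * d ^ (n - r) * e_{n - r}(1, …, p - 1)`.

For `0 < r < n` both `c_r` and `e_{n - r}` are divisible by `p`: multiplying all residues by a unit
`u` permutes them, so each of the two sums is unchanged modulo `p` by a factor `u ^ r`
(resp. `u ^ (n - r)`), and some `u` makes this factor different from `1`. So only `r = 0` and `r = n` survive modulo `p ^ 2`,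
and the permanent is congruent to `(n !) ^ 2 * (d ^ n + 1)`. Wilson's theorem and Fermat's little
theorem turn this into the stated form.
-/

open Finset Equiv

namespace PermanentModSq

/-- The sum over all permutations of the products of `x ∘ σ` over `T`, i.e. the coefficient of
`∏ i ∉ T, y i` in the permanent of `[x j + y k]`. -/
def permSum {n : ℕ} (x : Fin n → ℤ) (T : Finset (Fin n)) : ℤ :=
  ∑ σ : Perm (Fin n), ∏ i ∈ T, x (σ i)

lemma permanent_expand {n : ℕ} (x y : Fin n → ℤ) :
    (Matrix.of fun j k : Fin n => x j + y k).permanent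
      = ∑ T : Finset (Fin n), permSum x T * ∏ i ∈ Tᶜ, y i := by
  simp only [Matrix.permanent, Matrix.of_apply, permSum, Fintype.prod_add, Finset.sum_mul]
  rw [Finset.sum_comm]

lemma permSum_eq_of_card_eq {n : ℕ} (x : Fin n → ℤ) {S T : Finset (Fin n)}
    (h : S.card = T.card) : permSum x S = permSum x T := by
  classical
  let e : {i // i ∈ S} ≃ {i // i ∈ T} := Finset.equivOfCardEq h
  let τ : Perm (Fin n) := e.extendSubtype
  have hST : S.map τ.toEmbedding = T := by
    apply Finset.eq_of_subset_of_card_le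
    · intro i hi
      obtain ⟨a, ha, rfl⟩ := Finset.mem_map.1 hi
      exact e.extendSubtype_mem a ha
    · simp [h]
  unfold permSum
  rw [← Equiv.sum_comp (Equiv.mulRight τ), ← hST]
  simp only [Finset.prod_map]
  rfl

/-- For `0 < r < p - 1`, some unit `u` modulo `p` has `u ^ r ≠ 1`; multiplication by `u` is
realised as a permutation of the indices `i`, which stand for the residues `i + 1`. -/
lemma exists_scaling {p : ℕ} [Fact p.Prime] {r : ℕ} (h0 : 0 < r) (hr : r < p - 1) :
    ∃ (u : ZMod p) (μ : Perm (Fin (p - 1))), u ^ r ≠ 1 ∧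
      ∀ i, (((μ i : ℕ) + 1 : ℤ) : ZMod p) = u * (((i : ℕ) + 1 : ℤ) : ZMod p) := by
  have hp1 : 1 < p := (Fact.out : p.Prime).one_lt
  have hne : ∀ i : Fin (p - 1), (((i : ℕ) + 1 : ℕ) : ZMod p) ≠ 0 := by
    intro i h
    rw [ZMod.natCast_eq_zero_iff] at h
    have := Nat.le_of_dvd (Nat.succ_pos _) h
    omega
  let f : Fin (p - 1) → (ZMod p)ˣ := fun i => Units.mk0 _ (hne i)
  have hf : Function.Bijective f := by
    rw [Fintype.bijective_iff_injective_and_card]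
    refine ⟨fun i j hij => ?_, ?_⟩
    · have h : (((i : ℕ) + 1 : ℕ) : ZMod p) = (((j : ℕ) + 1 : ℕ) : ZMod p) :=
        congrArg Units.val hij
      rw [ZMod.natCast_eq_natCast_iff', Nat.mod_eq_of_lt (by omega),
        Nat.mod_eq_of_lt (by omega)] at h
      ext; omega
    · rw [ZMod.card_units, Fintype.card_fin]
  let e := Equiv.ofBijective f hf
  have hu : ∃ u : (ZMod p)ˣ, u ^ r ≠ 1 := by
    by_contra! h
    have := (FiniteField.forall_pow_eq_one_iff (ZMod p) r).1 h
    rw [ZMod.card] at this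
    exact absurd (Nat.le_of_dvd h0 this) (by omega)
  obtain ⟨u, hu⟩ := hu
  refine ⟨u, (e.trans (Equiv.mulLeft u)).trans e.symm, ?_, fun i => ?_⟩
  · rwa [← Units.val_pow_eq_pow_val, Ne, Units.val_eq_one]
  · have h := congrArg Units.val (e.apply_symm_apply (u * e i))
    have hv : ∀ j, ((e j : (ZMod p)ˣ) : ZMod p) = (((j : ℕ) + 1 : ℕ) : ZMod p) := fun j => rfl
    rw [Units.val_mul, hv, hv] at h
    push_cast at h ⊢
    exact h

lemma dvd_permSum {p : ℕ} [Fact p.Prime] {T : Finset (Fin (p - 1))}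
    (h0 : 0 < T.card) (hr : T.card < p - 1) :
    (p : ℤ) ∣ permSum (fun i : Fin (p - 1) => ((i : ℕ) + 1 : ℤ)) T := by
  obtain ⟨u, μ, hu, hμ⟩ := exists_scaling h0 hr
  rw [← ZMod.intCast_zmod_eq_zero_iff_dvd]
  have key : ((permSum (fun i : Fin (p - 1) => ((i : ℕ) + 1 : ℤ)) T : ℤ) : ZMod p)
      = u ^ T.card * ((permSum (fun i : Fin (p - 1) => ((i : ℕ) + 1 : ℤ)) T : ℤ) : ZMod p) := by
    conv_lhs => rw [permSum, ← Equiv.sum_comp (Equiv.mulLeft μ)]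
    simp only [permSum, Int.cast_sum, Int.cast_prod, Equiv.coe_mulLeft, Perm.mul_apply, hμ,
      Finset.prod_mul_distrib, Finset.prod_const, Finset.mul_sum]
  have h2 : (u ^ T.card - 1) *
      ((permSum (fun i : Fin (p - 1) => ((i : ℕ) + 1 : ℤ)) T : ℤ) : ZMod p) = 0 := by
    rw [sub_mul, one_mul, ← key, sub_self]
  exact (mul_eq_zero.1 h2).resolve_left (sub_ne_zero.2 hu)

/-- The elementary symmetric polynomial of degree `p - 1 - r`, written as a sum over the complements
of the `r`-element sets, vanishes modulo `p` at `d, 2 d, …, (p - 1) d`. -/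
lemma dvd_esymm {p : ℕ} [Fact p.Prime] (d : ℤ) {r : ℕ} (h0 : 0 < r) (hr : r < p - 1) :
    (p : ℤ) ∣ ∑ T ∈ (univ : Finset (Fin (p - 1))).powersetCard r,
      ∏ i ∈ Tᶜ, d * ((i : ℕ) + 1 : ℤ) := by
  obtain ⟨u, μ, hu, hμ⟩ := exists_scaling (p := p) (r := p - 1 - r) (by omega) (by omega)
  rw [← ZMod.intCast_zmod_eq_zero_iff_dvd]
  set E : ℤ := ∑ T ∈ (univ : Finset (Fin (p - 1))).powersetCard r,
      ∏ i ∈ Tᶜ, d * ((i : ℕ) + 1 : ℤ) with hE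
  have key : (E : ZMod p) = u ^ (p - 1 - r) * (E : ZMod p) := by
    have h1 : E = ∑ T ∈ (univ : Finset (Fin (p - 1))).powersetCard r,
        ∏ i ∈ Tᶜ, d * ((μ i : ℕ) + 1 : ℤ) := by
      symm
      refine Finset.sum_equiv μ.finsetCongr (fun T => ?_) (fun T _ => ?_)
      · simp [Finset.mem_powersetCard]
      · refine Finset.prod_equiv μ (fun i => ?_) (fun i _ => rfl)
        simp
    conv_lhs => rw [h1]
    rw [hE]
    simp only [Int.cast_sum, Int.cast_prod, Int.cast_mul, hμ, Finset.mul_sum]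
    refine Finset.sum_congr rfl fun T hT => ?_
    have hc : Tᶜ.card = p - 1 - r := by
      rw [Finset.card_compl, Fintype.card_fin, (Finset.mem_powersetCard.1 hT).2]
    rw [← hc, ← Finset.prod_const, ← Finset.prod_mul_distrib]
    exact Finset.prod_congr rfl fun i _ => by ring
  have h2 : (u ^ (p - 1 - r) - 1) * (E : ZMod p) = 0 := by
    rw [sub_mul, one_mul, ← key, sub_self]
  exact (mul_eq_zero.1 h2).resolve_left (sub_ne_zero.2 hu)

lemma prod_fin_succ (n : ℕ) : ∏ i : Fin n, ((i : ℕ) + 1 : ℤ) = (n.factorial : ℤ) := by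
  rw [Fin.prod_univ_eq_prod_range (fun i => (i + 1 : ℤ)) n, ← Finset.prod_range_add_one_eq_factorial]
  push_cast
  rfl

lemma permSum_empty {n : ℕ} (x : Fin n → ℤ) : permSum x ∅ = (n.factorial : ℤ) := by
  simp [permSum, Fintype.card_perm]

lemma permSum_univ {n : ℕ} (x : Fin n → ℤ) :
    permSum x univ = (n.factorial : ℤ) * ∏ i, x i := by
  simp only [permSum, Equiv.prod_comp]
  simp [Fintype.card_perm]

/-- Only the choices of all row terms or of all column terms survive modulo `p ^ 2`. -/
lemma permanent_modEq {p : ℕ} [Fact p.Prime] (hp2 : 2 < p) (d : ℤ) :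
    (Matrix.of fun j k : Fin (p - 1) =>
        ((j : ℕ) + 1 : ℤ) + d * ((k : ℕ) + 1 : ℤ)).permanent
      ≡ ((p - 1).factorial : ℤ) ^ 2 * (d ^ (p - 1) + 1) [ZMOD (p : ℤ) ^ 2] := by
  set x : Fin (p - 1) → ℤ := fun i => ((i : ℕ) + 1 : ℤ) with hx
  let F : ℕ → ℤ := fun r => ∑ T ∈ (univ : Finset (Fin (p - 1))).powersetCard r,
    permSum x T * ∏ i ∈ Tᶜ, d * x i
  have hexp : (Matrix.of fun j k : Fin (p - 1) =>
        ((j : ℕ) + 1 : ℤ) + d * ((k : ℕ) + 1 : ℤ)).permanent = ∑ r ∈ range (p - 1 + 1), F r := by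
    rw [permanent_expand x (fun i => d * x i), ← Finset.powerset_univ, Finset.sum_powerset]
    simp [F]
  obtain ⟨m, hm⟩ : ∃ m, p - 1 = m + 1 := ⟨p - 2, by omega⟩
  have hF0 : F 0 = ((p - 1).factorial : ℤ) ^ 2 * d ^ (p - 1) := by
    simp only [F, Finset.powersetCard_zero, Finset.sum_singleton, permSum_empty,
      Finset.compl_empty, Finset.prod_mul_distrib, Finset.prod_const, Finset.card_univ,
      Fintype.card_fin, hx, prod_fin_succ]
    ring
  have hFn : F (p - 1) = ((p - 1).factorial : ℤ) ^ 2 := by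
    have h : (univ : Finset (Fin (p - 1))).powersetCard (p - 1) = {univ} := by
      have h' := Finset.powersetCard_self (univ : Finset (Fin (p - 1)))
      rwa [Finset.card_univ, Fintype.card_fin] at h'
    simp only [F, h, Finset.sum_singleton, permSum_univ, Finset.compl_univ, Finset.prod_empty,
      hx, prod_fin_succ]
    ring
  have hmid : (p : ℤ) ^ 2 ∣ ∑ r ∈ range m, F (r + 1) := by
    refine Finset.dvd_sum fun r hr => ?_
    have hr' : r + 1 < p - 1 := by rw [Finset.mem_range] at hr; omega
    obtain ⟨S, -, hS⟩ := Finset.exists_subset_card_eq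
      (s := (univ : Finset (Fin (p - 1)))) (n := r + 1) (by simp; omega)
    have : F (r + 1) = permSum x S *
        ∑ T ∈ (univ : Finset (Fin (p - 1))).powersetCard (r + 1), ∏ i ∈ Tᶜ, d * x i := by
      rw [Finset.mul_sum]
      refine Finset.sum_congr rfl fun T hT => ?_
      rw [permSum_eq_of_card_eq x ((Finset.mem_powersetCard.1 hT).2.trans hS.symm)]
    rw [this, sq]
    exact mul_dvd_mul (dvd_permSum (by omega) (by omega)) (dvd_esymm d (by omega) hr')
  have hsum : ∑ r ∈ range (p - 1 + 1), F r = ∑ r ∈ range m, F (r + 1) + F 0 + F (p - 1) := by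
    rw [Finset.sum_range_succ]
    conv_lhs => rw [show range (p - 1) = range (m + 1) by rw [hm]]
    rw [Finset.sum_range_succ']
  rw [hexp, hsum, hF0, hFn]
  refine (Int.modEq_iff_dvd.2 ?_)
  obtain ⟨c, hc⟩ := hmid
  exact ⟨-c, by rw [hc]; ring⟩

end PermanentModSq

/-- Let `p` be an odd prime and `d` an integer not divisible by `p`. Then
`per [j + d*k]_{1 ≤ j,k ≤ p-1} ≡ d^(p-1) - 3 - 4*(p-1)! (mod p²)`. -/
theorem permanent_add_mul_mod_p_sq (p : ℕ) (hp : p.Prime) (hodd : Odd p) (d : ℤ)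
    (hd : ¬ (p : ℤ) ∣ d) :
    (Matrix.of fun j k : Fin (p - 1) =>
        ((j : ℕ) + 1 : ℤ) + d * ((k : ℕ) + 1 : ℤ)).permanent
      ≡ d ^ (p - 1) - 3 - 4 * (Nat.factorial (p - 1) : ℤ) [ZMOD (p : ℤ) ^ 2] := by
  have : Fact p.Prime := ⟨hp⟩
  have hp2 : 2 < p := by
    have := hp.two_le
    rcases hodd with ⟨k, hk⟩
    omega
  refine (PermanentModSq.permanent_modEq hp2 d).trans ?_
  obtain ⟨w, hw⟩ : (p : ℤ) ∣ ((p - 1).factorial : ℤ) + 1 := by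
    rw [← ZMod.intCast_zmod_eq_zero_iff_dvd]
    push_cast
    rw [ZMod.wilsons_lemma]
    ring
  obtain ⟨q, hq⟩ : (p : ℤ) ∣ d ^ (p - 1) - 1 := by
    rw [← ZMod.intCast_zmod_eq_zero_iff_dvd]
    push_cast
    rw [ZMod.pow_card_sub_one_eq_one, sub_self]
    rwa [Ne, ZMod.intCast_zmod_eq_zero_iff_dvd]
  -- `(p - 1)! = p w - 1` and `d ^ (p - 1) = p q + 1`.
  rw [eq_sub_of_add_eq hw, eq_add_of_sub_eq hq]
  exact Int.modEq_iff_dvd.2 ⟨2 * w * q - 2 * w ^ 2 - p * w ^ 2 * q, by ring⟩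
end

section
/- Let p be an odd prime and let d be an integer not divisible by p. Then the permanent of the p×p integer matrix with (j,k)-entry j + d·k (for 1 ≤ j,k ≤ p) satisfies 2·per[j+dk]_{1≤j,k≤p} ≡ (d+1)·p (mod p²). -/
/-!
Expanding each product `∏ (x (σ i) + y i)` over subsets shows that the permanent of the matrix
`[x j + y k]` of size `n` equals `∑ r, r! (n - r)! e_r(x) e_{n-r}(y)`, where `e_r` is the
elementary symmetric sum (`permanent_add_eq_sum_esym`). Here `x = (1, …, p)` and
`y = (d, 2d, …, pd)`, so everything is governed by `e_r(1, …, p)`.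

Modulo `p` one has `∏_{j=1}^p (X + j) = X ^ p - X`, hence `p ∣ e_r` for `1 ≤ r ≤ p`, `r ≠ p - 1`,
and `e_{p-1} ≡ -1`. So modulo `p²` only the terms `r = 1` and `r = p - 1` survive. As
`2 e_1 = p (p + 1)`, Wilson's theorem and Fermat's little theorem show that, after doubling,
they contribute `p` and `d p`.
-/

/-- The elementary symmetric sum of degree `r` of the integers `x i`. -/
def esym {n : ℕ} (x : Fin n → ℤ) (r : ℕ) : ℤ :=
  ∑ t ∈ (Finset.univ : Finset (Fin n)).powersetCard r, ∏ i ∈ t, x i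

open Finset

/-- The sum `∑ σ, ∏ i ∈ t, x (σ i)` depends on `t` only through its cardinality, since right
multiplication by a permutation moves `t` to any set of the same size. -/
lemma sum_perm_prod_eq_of_card_eq {n : ℕ} (x : Fin n → ℤ) (s t : Finset (Fin n))
    (h : #s = #t) :
    ∑ σ : Equiv.Perm (Fin n), ∏ i ∈ s, x (σ i) = ∑ σ : Equiv.Perm (Fin n), ∏ i ∈ t, x (σ i) := by
  classical
  let e : s ≃ t := Finset.equivOfCardEq h
  let π : Equiv.Perm (Fin n) := e.extendSubtype
  have hπ : s.map π.toEmbedding = t := by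
    apply Finset.eq_of_subset_of_card_le
    · intro a ha
      obtain ⟨b, hb, rfl⟩ := Finset.mem_map.1 ha
      exact e.extendSubtype_mem b hb
    · simp [h]
  rw [← hπ]
  simp only [Finset.prod_map]
  exact (Fintype.sum_equiv (Equiv.mulRight π) _ _ (fun σ => by simp)).symm

lemma sum_powersetCard_prod_perm {n : ℕ} (x : Fin n → ℤ) (r : ℕ) (σ : Equiv.Perm (Fin n)) :
    ∑ t ∈ (univ : Finset (Fin n)).powersetCard r, ∏ i ∈ t, x (σ i) = esym x r := by
  unfold esym
  refine Finset.sum_bij' (fun t _ => t.map σ.toEmbedding) (fun t _ => t.map σ.symm.toEmbedding)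
    ?_ ?_ ?_ ?_ ?_
  · intro t ht; simpa using ht
  · intro t ht; simpa using ht
  · intro t _; ext a; simp
  · intro t _; ext a; simp
  · intro t _; simp

/-- Averaging over all sets of the same size as `t` gives
`C(n, #t) * ∑ σ, ∏ i ∈ t, x (σ i) = n! * e_{#t}(x)`; the binomial coefficient then cancels. -/
lemma sum_perm_prod_s6 {n : ℕ} (x : Fin n → ℤ) (t : Finset (Fin n)) :
    ∑ σ : Equiv.Perm (Fin n), ∏ i ∈ t, x (σ i) =
      ((#t).factorial * (n - #t).factorial : ℕ) * esym x #t := by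
  have hle : #t ≤ n := by simpa using Finset.card_le_univ t
  have h1 : ∑ s ∈ (univ : Finset (Fin n)).powersetCard #t,
      ∑ σ : Equiv.Perm (Fin n), ∏ i ∈ s, x (σ i) = (n.factorial : ℤ) * esym x #t := by
    rw [Finset.sum_comm]
    simp [sum_powersetCard_prod_perm, Fintype.card_perm]
  have h2 : ∑ s ∈ (univ : Finset (Fin n)).powersetCard #t,
      ∑ σ : Equiv.Perm (Fin n), ∏ i ∈ s, x (σ i) =
      (n.choose #t : ℤ) * ∑ σ : Equiv.Perm (Fin n), ∏ i ∈ t, x (σ i) := by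
    rw [Finset.sum_congr rfl (fun s hs => sum_perm_prod_eq_of_card_eq x s t
      (Finset.mem_powersetCard.1 hs).2)]
    simp
  have h3 : (n.choose #t : ℤ) ≠ 0 := by exact_mod_cast (Nat.choose_pos hle).ne'
  apply mul_left_cancel₀ h3
  rw [← h2, h1, ← Nat.choose_mul_factorial_mul_factorial hle]
  push_cast
  ring

lemma sum_powersetCard_compl {n r : ℕ} (hr : r ≤ n) (y : Fin n → ℤ) :
    ∑ t ∈ (univ : Finset (Fin n)).powersetCard r, ∏ i ∈ tᶜ, y i = esym y (n - r) := by
  unfold esym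
  refine Finset.sum_bij' (fun t _ => tᶜ) (fun t _ => tᶜ) ?_ ?_ ?_ ?_ ?_
  · intro t ht
    simp only [mem_powersetCard_univ] at ht ⊢
    rw [Finset.card_compl, ht, Fintype.card_fin]
  · intro t ht
    simp only [mem_powersetCard_univ] at ht ⊢
    rw [Finset.card_compl, ht, Fintype.card_fin]
    omega
  · intro t _; simp
  · intro t _; simp
  · intro t _; rfl

/-- The permanent of a matrix of the form `x j + y k` in terms of elementary symmetric sums. -/
lemma permanent_add_eq_sum_esym {n : ℕ} (x y : Fin n → ℤ) :
    (Matrix.of fun j k : Fin n => x j + y k).permanent =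
      ∑ r ∈ range (n + 1), (r.factorial * (n - r).factorial : ℕ) * esym x r * esym y (n - r) := by
  unfold Matrix.permanent
  simp only [Matrix.of_apply]
  simp_rw [Fintype.prod_add]
  rw [Finset.sum_comm]
  simp_rw [← Finset.sum_mul, sum_perm_prod_s6]
  rw [← Finset.powerset_univ, Finset.sum_powerset, Finset.card_univ, Fintype.card_fin]
  refine Finset.sum_congr rfl fun r hr => ?_
  rw [← sum_powersetCard_compl (by simpa [Nat.lt_succ_iff] using hr), Finset.mul_sum]
  refine Finset.sum_congr rfl fun t ht => ?_
  rw [(Finset.mem_powersetCard.1 ht).2]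

lemma esym_const_mul {n : ℕ} (d : ℤ) (y : Fin n → ℤ) (r : ℕ) :
    esym (fun i => d * y i) r = d ^ r * esym y r := by
  unfold esym
  rw [Finset.mul_sum]
  refine Finset.sum_congr rfl fun t ht => ?_
  rw [Finset.prod_mul_distrib, Finset.prod_const, (Finset.mem_powersetCard.1 ht).2]

/-- `-1, …, -p` is a complete residue system modulo `p`, so `∏ (X + j)` is the product of
`X - a` over all `a` in `ZMod p`. -/
lemma prod_X_add_C_zmod (p : ℕ) [Fact p.Prime] :
    ∏ i : Fin p, (Polynomial.X + Polynomial.C (((i : ℕ) + 1 : ℤ) : ZMod p)) =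
      (Polynomial.X ^ p - Polynomial.X : Polynomial (ZMod p)) := by
  have hp1 : 1 < p := (Fact.out : p.Prime).one_lt
  have hroots := FiniteField.roots_X_pow_card_sub_X (ZMod p)
  rw [ZMod.card] at hroots
  have hmonic : (Polynomial.X ^ p - Polynomial.X : Polynomial (ZMod p)).Monic :=
    Polynomial.monic_X_pow_sub (by simpa using hp1)
  have h := Polynomial.prod_multiset_X_sub_C_of_monic_of_roots_card_eq hmonic (by
    rw [hroots, FiniteField.X_pow_card_sub_X_natDegree_eq _ hp1]
    simp)
  rw [hroots] at h
  rw [← h]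
  change _ = ∏ a : ZMod p, (Polynomial.X - Polynomial.C a)
  refine Fintype.prod_bijective (fun i : Fin p => -(((i : ℕ) + 1 : ℤ) : ZMod p)) ?_ _ _ ?_
  · rw [Fintype.bijective_iff_injective_and_card]
    refine ⟨fun i j hij => ?_, by simp⟩
    simp only [neg_inj, Int.cast_add, Int.cast_natCast, Int.cast_one, add_left_inj] at hij
    rw [ZMod.natCast_eq_natCast_iff, Nat.ModEq, Nat.mod_eq_of_lt i.2, Nat.mod_eq_of_lt j.2] at hij
    exact Fin.ext hij
  · intro i
    rw [Polynomial.C_neg, sub_neg_eq_add]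

lemma cast_esym_zmod (p : ℕ) [Fact p.Prime] {r : ℕ} (hr : r ≤ p) :
    ((esym (fun i : Fin p => ((i : ℕ) + 1 : ℤ)) r : ℤ) : ZMod p) =
      (Polynomial.X ^ p - Polynomial.X : Polynomial (ZMod p)).coeff (p - r) := by
  rw [← prod_X_add_C_zmod, Finset.prod_X_add_C_coeff _ _ (by simp), Finset.card_univ,
    Fintype.card_fin, Nat.sub_sub_self hr]
  simp [esym]

lemma dvd_esym (p : ℕ) [Fact p.Prime] {r : ℕ} (hr : r ≤ p) (h0 : r ≠ 0) (h1 : r + 1 ≠ p) :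
    (p : ℤ) ∣ esym (fun i : Fin p => ((i : ℕ) + 1 : ℤ)) r := by
  rw [← ZMod.intCast_zmod_eq_zero_iff_dvd, cast_esym_zmod p hr, Polynomial.coeff_sub,
    Polynomial.coeff_X_pow, Polynomial.coeff_X, if_neg (by omega), if_neg (by omega), sub_zero]

lemma cast_esym_pred (p : ℕ) [Fact p.Prime] :
    ((esym (fun i : Fin p => ((i : ℕ) + 1 : ℤ)) (p - 1) : ℤ) : ZMod p) = -1 := by
  have hp1 : 1 < p := (Fact.out : p.Prime).one_lt
  rw [cast_esym_zmod p (by omega), Polynomial.coeff_sub,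
    Polynomial.coeff_X_pow, Polynomial.coeff_X, if_neg (by omega), if_pos (by omega), zero_sub]

lemma two_mul_esym_one (p : ℕ) :
    2 * esym (fun i : Fin p => ((i : ℕ) + 1 : ℤ)) 1 = p * (p + 1) := by
  have h : esym (fun i : Fin p => ((i : ℕ) + 1 : ℤ)) 1 = ∑ i : Fin p, ((i : ℕ) + 1 : ℤ) := by
    simp [esym, Finset.powersetCard_one]
  rw [h, Fin.sum_univ_eq_sum_range (fun i => (i + 1 : ℤ))]
  clear h
  induction p with
  | zero => simp
  | succ k ih => rw [Finset.sum_range_succ, mul_add, ih]; push_cast; ring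

/-- Let `p` be an odd prime and `d` an integer not divisible by `p`. Then
`2 * per [j + d*k]_{1 ≤ j,k ≤ p} ≡ (d+1)*p (mod p²)`. -/
theorem two_mul_permanent_add_mul_mod_p_sq (p : ℕ) (hp : p.Prime) (hodd : Odd p) (d : ℤ)
    (hd : ¬ (p : ℤ) ∣ d) :
    2 * (Matrix.of fun j k : Fin p =>
        ((j : ℕ) + 1 : ℤ) + d * ((k : ℕ) + 1 : ℤ)).permanent
      ≡ (d + 1) * (p : ℤ) [ZMOD (p : ℤ) ^ 2] := by
  have : Fact p.Prime := ⟨hp⟩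
  have hp3 : 3 ≤ p := by
    have := hp.two_le
    rcases hodd with ⟨m, hm⟩
    omega
  rw [permanent_add_eq_sum_esym (fun j : Fin p => ((j : ℕ) + 1 : ℤ))
    (fun k : Fin p => d * ((k : ℕ) + 1 : ℤ))]
  simp_rw [esym_const_mul]
  set E := esym (fun i : Fin p => ((i : ℕ) + 1 : ℤ)) with hE
  have hE1 : 2 * E 1 = p * (p + 1) := two_mul_esym_one p
  have hEp : ((E (p - 1) : ℤ) : ZMod p) = -1 := cast_esym_pred p
  have hdz : (d : ZMod p) ≠ 0 := by
    rwa [Ne, ZMod.intCast_zmod_eq_zero_iff_dvd]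
  have hF : (d : ZMod p) ^ (p - 1) = 1 := ZMod.pow_card_sub_one_eq_one hdz
  have hW : (((p - 1).factorial : ℕ) : ZMod p) = -1 := ZMod.wilsons_lemma p
  have lift : ∀ a b : ℤ, (a : ZMod p) = (b : ZMod p) →
      (p : ℤ) * a ≡ p * b [ZMOD (p : ℤ) ^ 2] := by
    intro a b hab
    rw [ZMod.intCast_eq_intCast_iff] at hab
    rw [pow_two]
    exact hab.mul_left'
  have key : ∀ r ∈ range (p + 1),
      2 * (((r.factorial * (p - r).factorial : ℕ) : ℤ) * E r * (d ^ (p - r) * E (p - r))) ≡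
        (if r = 1 then (p : ℤ) else 0) + (if r = p - 1 then d * p else 0)
          [ZMOD (p : ℤ) ^ 2] := by
    intro r hr
    have hrp : r ≤ p := by simpa [Nat.lt_succ_iff] using hr
    by_cases h1 : r = 1
    · subst h1
      rw [if_pos rfl, if_neg (by omega), add_zero]
      have := lift ((p + 1) * (p - 1).factorial * d ^ (p - 1) * E (p - 1)) 1 (by
        push_cast
        rw [hEp, hF, hW]
        simp)
      rw [mul_one] at this
      convert this using 1
      rw [Nat.factorial_one, one_mul]
      linear_combination ((p - 1).factorial * d ^ (p - 1) * E (p - 1) : ℤ) * hE1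
    by_cases h2 : r = p - 1
    · subst h2
      rw [if_neg h1, if_pos rfl, zero_add, Nat.sub_sub_self (by omega : 1 ≤ p)]
      have := lift ((p + 1) * (p - 1).factorial * d * E (p - 1)) d (by
        push_cast
        rw [hEp, hW]
        simp)
      rw [mul_comm d]
      convert this using 1
      rw [Nat.factorial_one, mul_one, pow_one]
      linear_combination ((p - 1).factorial * d * E (p - 1) : ℤ) * hE1
    rw [if_neg h1, if_neg h2, add_zero, Int.modEq_zero_iff_dvd, pow_two]
    have hfac : (p : ℤ) ∣ (p.factorial : ℤ) := by
      exact_mod_cast Nat.dvd_factorial hp.pos le_rfl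
    -- In the boundary terms one factor `p` comes from `p!` and the other from `e_p = p!`.
    by_cases h3 : r = 0
    · subst h3
      rw [Nat.factorial_zero, one_mul, Nat.sub_zero]
      obtain ⟨u, hu⟩ := hfac
      obtain ⟨v, hv⟩ := dvd_esym p le_rfl hp.ne_zero (by omega)
      rw [← hE] at hv
      exact ⟨2 * u * E 0 * d ^ p * v, by rw [hu, hv]; ring⟩
    by_cases h4 : r = p
    · subst h4
      rw [Nat.sub_self, Nat.factorial_zero, mul_one]
      obtain ⟨u, hu⟩ := hfac
      obtain ⟨v, hv⟩ := dvd_esym r le_rfl hp.ne_zero (by omega)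
      rw [← hE] at hv
      exact ⟨2 * u * E 0 * v, by rw [hu, hv]; ring⟩
    obtain ⟨u, hu⟩ := dvd_esym p hrp h3 (by omega)
    obtain ⟨v, hv⟩ := dvd_esym p (Nat.sub_le p r) (by omega) (by omega)
    rw [← hE] at hu hv
    exact ⟨2 * (r.factorial * (p - r).factorial : ℕ) * d ^ (p - r) * u * v, by
      rw [hu, hv]; ring⟩
  rw [Finset.mul_sum]
  have hsum : ∑ r ∈ range (p + 1),
      ((if r = 1 then (p : ℤ) else 0) + (if r = p - 1 then d * p else 0)) = (d + 1) * p := by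
    rw [Finset.sum_add_distrib, Finset.sum_ite_eq', Finset.sum_ite_eq',
      if_pos (by rw [mem_range]; omega), if_pos (by rw [mem_range]; omega)]
    ring
  rw [← hsum]
  exact Int.ModEq.sum key
end

section
/- Let p be an odd prime and let d be an integer not divisible by p. Then the permanent of the p×p integer matrix with (j,k)-entry j + d·k for 0 ≤ j,k ≤ p−1 satisfies 2·per[j+dk]_{0≤j,k≤p−1} ≡ −(d+1)·p (mod p²). -/
/-!
Write `e_s` for the `s`-th elementary symmetric function of `0, 1, …, p - 1`. Expanding
`∏ k, (σ k + d k)` and summing over all permutations `σ` gives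

  `per = ∑ s ≤ p, d ^ s * s! * (p - s)! * e_s * e_{p - s}`   (`permanent_eq_sum`),

because `∑ σ, ∏ i ∈ S, a (σ i) = |S|! (n - |S|)! e_{|S|}(a)` (`sum_perm_prod_eq`).

Modulo `p`, `∏ i < p, (X + i) = X ^ p - X`, so `p ∣ e_s` for `1 ≤ s ≤ p - 2` and
`e_{p - 1} ≡ -1` (`esymmFin_cast`); moreover `e_p = 0` and `2 e_1 = p (p - 1)`. Hence modulo `p ^ 2`
only the terms `s = 1` and `s = p - 1` survive, and twice the permanent is congruent to
`p (p - 1) (d + d ^ (p - 1)) (p - 1)! e_{p - 1}`. The cofactor of `p` is evaluated modulo `p` by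
Wilson's and Fermat's theorems.
-/

open Finset Equiv

/-- The `s`-th elementary symmetric function of the integers `0, 1, …, p - 1`. -/
def esymmFin (p s : ℕ) : ℤ :=
  ∑ t ∈ powersetCard s (univ : Finset (Fin p)), ∏ i ∈ t, ((i : ℕ) : ℤ)

/-- Averaging over permutations: both sides agree after multiplication by `n.choose |S|`, since the
left-hand side depends only on `|S|` and its sum over all sets of that size is `n!` times the
elementary symmetric function. -/
theorem sum_perm_prod_eq {n : Type*} [Fintype n] [DecidableEq n] (a : n → ℤ) (S : Finset n) :
    ∑ σ : Perm n, ∏ i ∈ S, a (σ i) =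
      ((#S).factorial * (Fintype.card n - #S).factorial : ℕ) *
        ∑ t ∈ powersetCard #S univ, ∏ i ∈ t, a i := by
  have hS : #S ≤ Fintype.card n := card_le_univ S
  have hconst : ∀ T ∈ powersetCard #S (univ : Finset n),
      ∑ σ : Perm n, ∏ i ∈ T, a (σ i) = ∑ σ : Perm n, ∏ i ∈ S, a (σ i) := by
    intro T hT
    obtain ⟨π, hπ⟩ := Perm.exists_map_finset_eq S T (mem_powersetCard_univ.1 hT).symm
    rw [← hπ]
    conv_rhs => rw [← (Group.mulRight_bijective π).sum_comp]
    simp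
  have htot : ∑ T ∈ powersetCard #S (univ : Finset n), ∑ σ : Perm n, ∏ i ∈ T, a (σ i) =
      (Fintype.card n).factorial * ∑ t ∈ powersetCard #S univ, ∏ i ∈ t, a i := by
    rw [sum_comm]
    have : ∀ σ : Perm n, ∑ T ∈ powersetCard #S (univ : Finset n), ∏ i ∈ T, a (σ i) =
        ∑ t ∈ powersetCard #S univ, ∏ i ∈ t, a i := by
      intro σ
      conv_rhs => rw [← map_univ_equiv σ, powersetCard_map]
      simp
    simp [this, Fintype.card_perm]
  rw [sum_congr rfl hconst, sum_const, card_powersetCard, card_univ, nsmul_eq_mul,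
    ← Nat.choose_mul_factorial_mul_factorial hS] at htot
  have hc : ((Fintype.card n).choose #S : ℤ) ≠ 0 := by exact_mod_cast (Nat.choose_pos hS).ne'
  apply mul_left_cancel₀ hc
  rw [htot]; push_cast; ring

theorem permanent_eq_sum (p : ℕ) (d : ℤ) :
    (Matrix.of fun j k : Fin p => ((j : ℕ) : ℤ) + d * ((k : ℕ) : ℤ)).permanent =
      ∑ s ∈ range (p + 1), d ^ s * ((s.factorial * (p - s).factorial : ℕ) : ℤ) *
        (esymmFin p s * esymmFin p (p - s)) := by
  have h : ∀ σ : Perm (Fin p), ∏ i, (((σ i : Fin p) : ℕ) + d * ((i : ℕ) : ℤ)) =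
      ∑ t : Finset (Fin p), (∏ i ∈ t, (d * ((i : ℕ) : ℤ))) * ∏ i ∈ tᶜ, (((σ i : Fin p) : ℕ) : ℤ) := by
    intro σ
    rw [← Fintype.prod_add]
    exact prod_congr rfl fun i _ => add_comm _ _
  simp only [Matrix.permanent, Matrix.of_apply, h]
  rw [sum_comm, ← powerset_univ, sum_powerset, card_univ, Fintype.card_fin]
  refine sum_congr rfl fun s hs => ?_
  have hsp : s ≤ p := Nat.lt_succ_iff.1 (mem_range.1 hs)
  rw [esymmFin, sum_mul, mul_sum]
  refine sum_congr rfl fun t ht => ?_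
  have ht : #t = s := mem_powersetCard_univ.1 ht
  have hc : #tᶜ = p - s := by rw [card_compl, Fintype.card_fin, ht]
  rw [← mul_sum, sum_perm_prod_eq (fun i : Fin p => ((i : ℕ) : ℤ)), hc, prod_mul_distrib,
    prod_const, ht, Fintype.card_fin, Nat.sub_sub_self hsp, esymmFin]
  push_cast; ring

open Polynomial in
/-- Modulo `p` the elementary symmetric functions are the coefficients of
`∏ i < p, (X + i) = X ^ p - X`. -/
theorem esymmFin_cast (p : ℕ) [Fact p.Prime] {s : ℕ} (hs : s ≤ p) :
    (esymmFin p s : ZMod p) = (X ^ p - X : (ZMod p)[X]).coeff (p - s) := by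
  have hp : p.Prime := Fact.out
  have key : ∏ i : Fin p, (X + C ((i : ℕ) : ZMod p)) = (X ^ p - X : (ZMod p)[X]) := by
    -- The negatives of `0, …, p - 1` run over all of `ZMod p`, the root set of `X ^ p - X`.
    have hinj : Function.Injective fun i : Fin p => -((i : ℕ) : ZMod p) := by
      intro i j hij
      exact Fin.ext (CharP.natCast_injOn_Iio (ZMod p) p i.2 j.2 (neg_injective hij))
    have hbij := (Fintype.bijective_iff_injective_and_card _).2 ⟨hinj, by simp [ZMod.card]⟩
    have hroots : (X ^ p - X : (ZMod p)[X]).roots = univ.val := by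
      simpa [ZMod.card] using FiniteField.roots_X_pow_card_sub_X (ZMod p)
    have hdeg := FiniteField.X_pow_card_sub_X_natDegree_eq (ZMod p) hp.one_lt
    have hmonic : (X ^ p - X : (ZMod p)[X]).Monic :=
      monic_X_pow_sub (by simpa using hp.one_lt)
    have hprod := prod_multiset_X_sub_C_of_monic_of_roots_card_eq hmonic
      (by rw [hroots, hdeg, ← card_def, card_univ, ZMod.card])
    rw [hroots] at hprod
    rw [← hprod]
    have hcomp := hbij.prod_comp fun a : ZMod p => X - C a
    simp only [C_neg, sub_neg_eq_add] at hcomp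
    exact hcomp
  rw [← key, Finset.prod_X_add_C_coeff _ _ (by simp)]
  simp [esymmFin, Nat.sub_sub_self hs]

/-- Let `p` be an odd prime and `d` an integer not divisible by `p`. Then
`2 * per [j + d*k]_{0 ≤ j,k ≤ p-1} ≡ -(d+1)*p (mod p²)`. -/
theorem two_mul_permanent_add_mul_zero_indexed_mod_p_sq (p : ℕ) (hp : p.Prime) (hodd : Odd p)
    (d : ℤ) (hd : ¬ (p : ℤ) ∣ d) :
    2 * (Matrix.of fun j k : Fin p => ((j : ℕ) : ℤ) + d * ((k : ℕ) : ℤ)).permanent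
      ≡ -((d + 1) * (p : ℤ)) [ZMOD (p : ℤ) ^ 2] := by
  have : Fact p.Prime := ⟨hp⟩
  have hp3 : 3 ≤ p := by have := hp.two_le; obtain ⟨k, rfl⟩ := hodd; omega
  have hmid : ∀ s, 1 ≤ s → s ≤ p - 2 → (p : ℤ) ∣ esymmFin p s := by
    intro s h1 h2
    rw [← ZMod.intCast_zmod_eq_zero_iff_dvd, esymmFin_cast p (by omega)]
    rw [Polynomial.coeff_sub, Polynomial.coeff_X_pow, Polynomial.coeff_X, if_neg (by omega),
      if_neg (by omega), sub_zero]
  have hpm : (esymmFin p (p - 1) : ZMod p) = -1 := by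
    rw [esymmFin_cast p (by omega)]
    rw [Polynomial.coeff_sub, Polynomial.coeff_X_pow, Polynomial.coeff_X, if_neg (by omega),
      if_pos (by omega), zero_sub]
  have hpp : esymmFin p p = 0 := by
    have : powersetCard p (univ : Finset (Fin p)) = {univ} := by
      simpa using powersetCard_self (univ : Finset (Fin p))
    rw [esymmFin, this, sum_singleton]
    exact prod_eq_zero (mem_univ ⟨0, hp.pos⟩) (by simp)
  have h1 : 2 * esymmFin p 1 = p * (p - 1) := by
    have := Finset.sum_range_id_mul_two p
    simp only [esymmFin, powersetCard_one, sum_map, Function.Embedding.coeFn_mk, prod_singleton]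
    rw [Fin.sum_univ_eq_sum_range (fun i => (i : ℤ)) p]
    zify [hp.one_le] at this
    linarith
  rw [permanent_eq_sum, mul_sum]
  have hvan : ∀ s ∈ range (p + 1), s ≠ 1 ∧ s ≠ p - 1 →
      ((2 * (d ^ s * ((s.factorial * (p - s).factorial : ℕ) : ℤ) *
        (esymmFin p s * esymmFin p (p - s))) : ℤ) : ZMod (p ^ 2)) = 0 := by
    intro s hs hne
    rw [ZMod.intCast_zmod_eq_zero_iff_dvd]
    have hsp := mem_range.1 hs
    rcases Nat.eq_zero_or_pos s with rfl | h0
    · simp [hpp]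
    rcases eq_or_ne s p with rfl | hsp'
    · simp [hpp]
    have := mul_dvd_mul (hmid s h0 (by omega)) (hmid (p - s) (by omega) (by omega))
    push_cast
    rw [sq]
    exact (this.mul_left _).mul_left _
  have hsum : ((∑ s ∈ range (p + 1), 2 * (d ^ s * ((s.factorial * (p - s).factorial : ℕ) : ℤ) *
        (esymmFin p s * esymmFin p (p - s))) : ℤ) : ZMod (p ^ 2)) =
      ((p * (p - 1) * ((d + d ^ (p - 1)) * (p - 1).factorial * esymmFin p (p - 1)) : ℤ) :
        ZMod (p ^ 2)) := by
    rw [Int.cast_sum, sum_eq_add_of_mem 1 (p - 1) (by simp; omega) (by simp) (by omega) hvan,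
      ← Int.cast_add, Nat.sub_sub_self hp.one_le, ← h1]
    congr 1
    push_cast
    simp only [Nat.factorial_one]
    push_cast
    ring
  rw [← Nat.cast_pow, ← ZMod.intCast_eq_intCast_iff, hsum, ZMod.intCast_eq_intCast_iff, Nat.cast_pow,
    sq, mul_assoc, mul_comm (d + 1), ← mul_neg]
  -- Both sides are `p` times something, so the cofactors need only be compared modulo `p`.
  apply Int.ModEq.mul_left'
  rw [← ZMod.intCast_eq_intCast_iff]
  have hd0 : (d : ZMod p) ≠ 0 := by rwa [Ne, ZMod.intCast_zmod_eq_zero_iff_dvd]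
  have hw := ZMod.wilsons_lemma p
  push_cast
  rw [hpm, hw, ZMod.pow_card_sub_one_eq_one hd0]
  simp
end

section
/- Let p > 3 be a prime and let d be an integer not divisible by p. Then the permanent of the ((p−1)/2)×((p−1)/2) integer matrix with (j,k)-entry j² + d·k² (for 1 ≤ j,k ≤ (p−1)/2) satisfies per[j²+dk²]_{1≤j,k≤(p−1)/2} ≡ (d^{(p-1)/2} + 1)·(((p−1)/2)!)³ (mod p²). -/
/-!
Write `n = (p-1)/2` and `x j = j²`. Expanding every product `∏ j, (x j + d * x (σ j))` over subsets
`S` of the rows gives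
`per = ∑ S, (∏ j ∈ S, x j) * d ^ |Sᶜ| * F(Sᶜ)`, where `F(T) = ∑ σ, ∏ j ∈ T, x (σ j)`.
The number `F(T)` depends only on `r = |T|`, and summing over all `T` of size `r` gives
`choose n r * F(T) = n! * e_r(x)`, with `e_r` the elementary symmetric polynomial.

Modulo `p` the `x j` are the `n` roots of `X ^ n - 1`, hence `p ∣ e_r(x)` for `0 < r < n`
(`prime_dvd_esymm`); as `choose n r` is prime to `p`, also `p ∣ F(T)` for `|T| = r`
(`prime_dvd_permSum`). So the subsets of each intermediate size together contribute a multiple of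
`e_{n-r}(x) * F`, which vanishes modulo `p²`. The sizes `0` and `n` contribute
`d ^ n * (n!)³` and `(n!)³`.
-/

open Finset Polynomial

/-- The sum over all permutations `σ` of `∏ j ∈ T, x (σ j)`. -/
def permSum {n : ℕ} (x : Fin n → ℤ) (T : Finset (Fin n)) : ℤ :=
  ∑ σ : Equiv.Perm (Fin n), ∏ j ∈ T, x (σ j)

theorem permSum_eq_of_card_eq {n : ℕ} (x : Fin n → ℤ) {S T : Finset (Fin n)}
    (h : #S = #T) : permSum x S = permSum x T := by
  obtain ⟨τ, hτ⟩ : ∃ τ : Equiv.Perm (Fin n), S.map τ.toEmbedding = T := by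
    let e : S ≃ T := Finset.equivOfCardEq h
    refine ⟨e.extendSubtype, ?_⟩
    refine Finset.eq_of_subset_of_card_le ?_ (by simp [h])
    intro a ha
    obtain ⟨b, hb, rfl⟩ := Finset.mem_map.1 ha
    exact e.extendSubtype_mem b hb
  subst hτ
  unfold permSum
  simp only [Finset.prod_map]
  exact (Fintype.sum_equiv (Equiv.mulRight τ) _ _ (fun σ => by simp)).symm

theorem sum_permSum {n : ℕ} (x : Fin n → ℤ) (r : ℕ) :
    ∑ T ∈ (univ : Finset (Fin n)).powersetCard r, permSum x T
      = n.factorial * ∑ T ∈ (univ : Finset (Fin n)).powersetCard r, ∏ j ∈ T, x j := by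
  unfold permSum
  rw [Finset.sum_comm]
  have key : ∀ σ : Equiv.Perm (Fin n),
      ∑ T ∈ (univ : Finset (Fin n)).powersetCard r, ∏ j ∈ T, x (σ j)
        = ∑ T ∈ (univ : Finset (Fin n)).powersetCard r, ∏ j ∈ T, x j := by
    intro σ
    refine Finset.sum_equiv (Equiv.finsetCongr σ) (fun T => by simp [mem_powersetCard])
      (fun T _ => by simp [Equiv.finsetCongr])
  rw [Finset.sum_congr rfl (fun σ _ => key σ)]
  simp [Fintype.card_perm]

theorem choose_mul_permSum {n : ℕ} (x : Fin n → ℤ) (T : Finset (Fin n)) :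
    (n.choose #T : ℤ) * permSum x T
      = n.factorial * ∑ U ∈ (univ : Finset (Fin n)).powersetCard #T, ∏ j ∈ U, x j := by
  rw [← sum_permSum, Finset.sum_congr rfl
    (fun U hU => permSum_eq_of_card_eq x (mem_powersetCard.1 hU).2)]
  simp

theorem prime_dvd_permSum {p n : ℕ} (hp : p.Prime) (hn : n < p) (x : Fin n → ℤ)
    (T : Finset (Fin n))
    (h : (p : ℤ) ∣ ∑ U ∈ (univ : Finset (Fin n)).powersetCard #T, ∏ j ∈ U, x j) :
    (p : ℤ) ∣ permSum x T := by
  have h1 : (p : ℤ) ∣ (n.choose #T : ℤ) * permSum x T := by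
    rw [choose_mul_permSum]; exact h.mul_left _
  refine ((Nat.prime_iff_prime_int.1 hp).dvd_or_dvd h1).resolve_left fun h2 => ?_
  have hT : #T ≤ n := by simpa using card_le_univ T
  have h3 : p ∣ n.factorial := by
    rw [← Nat.choose_mul_factorial_mul_factorial hT, mul_assoc]
    exact (Int.natCast_dvd_natCast.1 h2).mul_right _
  exact absurd ((hp.dvd_factorial).1 h3) (by omega)

theorem permanent_eq_sum_permSum {n : ℕ} (x : Fin n → ℤ) (d : ℤ) :
    (Matrix.of fun j k : Fin n => x j + d * x k).permanent
      = ∑ S : Finset (Fin n), (∏ j ∈ S, x j) * (d ^ #Sᶜ * permSum x Sᶜ) := by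
  -- Transposing puts the permutation on the column variable.
  rw [← Matrix.permanent_transpose]
  simp only [Matrix.permanent, Matrix.transpose_apply, Matrix.of_apply, Fintype.prod_add, permSum]
  rw [Finset.sum_comm]
  refine Finset.sum_congr rfl fun S _ => ?_
  simp only [Finset.mul_sum, Finset.prod_mul_distrib, Finset.prod_const]

/-- Modulo `p` the squares `1², …, n²` are the roots of `X ^ n - 1`, whose intermediate
coefficients vanish. -/
theorem prime_dvd_esymm {p n : ℕ} (hp : p.Prime) (hn : p = 2 * n + 1) {r : ℕ} (hr : 0 < r)
    (hrn : r < n) :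
    (p : ℤ) ∣ ∑ U ∈ (univ : Finset (Fin n)).powersetCard r, ∏ j ∈ U, ((j : ℕ) + 1 : ℤ) ^ 2 := by
  have := Fact.mk hp
  let f : Fin n → ZMod p := fun j => (((j : ℕ) + 1 : ℕ) : ZMod p) ^ 2
  have hne : ∀ a : ℕ, 0 < a → a < p → (a : ZMod p) ≠ 0 := fun a h0 h1 h => by
    rw [ZMod.natCast_eq_zero_iff] at h
    exact absurd (Nat.le_of_dvd h0 h) (by omega)
  have hinj : Function.Injective f := by
    intro i j hij
    have hi := i.2
    have hj := j.2
    rcases sq_eq_sq_iff_eq_or_eq_neg.1 hij with h | h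
    · rw [ZMod.natCast_eq_natCast_iff', Nat.mod_eq_of_lt (by omega),
        Nat.mod_eq_of_lt (by omega)] at h
      ext; omega
    · exfalso
      refine hne (((i : ℕ) + 1) + ((j : ℕ) + 1)) (by omega) (by omega) ?_
      rw [Nat.cast_add, h, neg_add_cancel]
  have hf : ∀ j, f j ^ n = 1 := by
    intro j
    have hj := j.2
    have := ZMod.pow_card_sub_one_eq_one (hne ((j : ℕ) + 1) (by omega) (by omega))
    rw [show p - 1 = 2 * n by omega, pow_mul] at this
    exact this
  have hn0 : n ≠ 0 := by omega
  -- The values `-(j²)` are used as roots so that no signs enter the coefficients.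
  have hpoly : ∏ j, (X + C (f j)) = X ^ n - C ((-1) ^ n : ZMod p) := by
    have hm1 : (∏ j, (X + C (f j))).Monic := monic_prod_of_monic _ _ fun j _ => monic_X_add_C _
    have hm2 : (X ^ n - C ((-1) ^ n : ZMod p)).Monic := monic_X_pow_sub_C _ hn0
    have hd1 : (∏ j, (X + C (f j))).degree = (n : WithBot ℕ) := by
      rw [degree_prod]; simp
    have hd2 : (X ^ n - C ((-1) ^ n : ZMod p)).degree = (n : WithBot ℕ) :=
      degree_X_pow_sub_C (Nat.pos_of_ne_zero hn0) _
    refine eq_of_degree_sub_lt_of_eval_index_eq (s := univ) (v := fun j => - f j)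
      (fun i _ j _ h => hinj (neg_injective h)) ?_ ?_
    · have := degree_sub_lt (hd1.trans hd2.symm) hm1.ne_zero
        (by rw [hm1.leadingCoeff, hm2.leadingCoeff])
      rw [hd1] at this
      simpa using this
    · intro i _
      rw [eval_prod, Finset.prod_eq_zero (mem_univ i) (by simp)]
      rw [eval_sub, eval_pow, eval_X, eval_C, neg_pow, hf]
      simp
  have hc := Finset.prod_X_add_C_coeff (univ : Finset (Fin n)) f (k := n - r) (by simp)
  rw [hpoly, coeff_sub, coeff_X_pow, coeff_C, if_neg (by omega), if_neg (by omega), card_univ,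
    Fintype.card_fin, show n - (n - r) = r by omega, sub_zero] at hc
  rw [← ZMod.intCast_zmod_eq_zero_iff_dvd, hc]
  simp [f]

/-- Let `p > 3` be a prime and `d` an integer not divisible by `p`. Then
`per [j² + d*k²]_{1 ≤ j,k ≤ (p-1)/2} ≡ (d^((p-1)/2) + 1) * (((p-1)/2)!)³ (mod p²)`. -/
theorem permanent_sq_add_mul_sq_mod_p_sq (p : ℕ) (hp : p.Prime) (hp3 : 3 < p) (d : ℤ)
    (hd : ¬ (p : ℤ) ∣ d) :
    (Matrix.of fun j k : Fin ((p - 1) / 2) =>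
        ((j : ℕ) + 1 : ℤ) ^ 2 + d * ((k : ℕ) + 1 : ℤ) ^ 2).permanent
      ≡ (d ^ ((p - 1) / 2) + 1) * (Nat.factorial ((p - 1) / 2) : ℤ) ^ 3
        [ZMOD (p : ℤ) ^ 2] := by
  obtain ⟨m, hm⟩ := hp.odd_of_ne_two (by omega)
  have hn : (p - 1) / 2 = m := by omega
  rw [hn]
  obtain ⟨n, rfl⟩ : ∃ n, m = n + 1 := ⟨m - 1, by omega⟩
  let x : Fin (n + 1) → ℤ := fun j => ((j : ℕ) + 1 : ℤ) ^ 2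
  have hx : ∏ j, x j = ((n + 1).factorial : ℤ) ^ 2 := by
    rw [Finset.prod_pow, ← Finset.prod_range_add_one_eq_factorial, Finset.prod_range]
    push_cast
    rfl
  have hexp := permanent_eq_sum_permSum x d
  rw [← Finset.powerset_univ, Finset.sum_powerset, card_univ, Fintype.card_fin,
    Finset.sum_range_succ, Finset.sum_range_succ'] at hexp
  have hmid : (p : ℤ) ^ 2 ∣ ∑ i ∈ range n,
      ∑ S ∈ powersetCard (i + 1) univ, (∏ j ∈ S, x j) * (d ^ #Sᶜ * permSum x Sᶜ) := by
    refine Finset.dvd_sum fun i hi => ?_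
    rw [mem_range] at hi
    obtain ⟨T, hT⟩ : ∃ T : Finset (Fin (n + 1)), #T = n - i := by
      obtain ⟨T, -, hT⟩ := Finset.exists_subset_card_eq
        (s := (univ : Finset (Fin (n + 1)))) (n := n - i) (by simp; omega)
      exact ⟨T, hT⟩
    have hS : ∀ S ∈ powersetCard (i + 1) (univ : Finset (Fin (n + 1))),
        (∏ j ∈ S, x j) * (d ^ #Sᶜ * permSum x Sᶜ)
          = (∏ j ∈ S, x j) * (d ^ #T * permSum x T) := by
      intro S hS
      have hc : #Sᶜ = #T := by
        rw [card_compl, (mem_powersetCard.1 hS).2, hT, Fintype.card_fin]; omega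
      rw [permSum_eq_of_card_eq x hc, hc]
    rw [Finset.sum_congr rfl hS, ← Finset.sum_mul, sq]
    refine mul_dvd_mul (prime_dvd_esymm hp hm (by omega) (by omega)) (Dvd.dvd.mul_left ?_ _)
    refine prime_dvd_permSum hp (by omega) x T ?_
    rw [hT]
    exact prime_dvd_esymm hp hm (by omega) (by omega)
  have hall : permSum x univ = (n + 1).factorial * ((n + 1).factorial : ℤ) ^ 2 := by
    unfold permSum
    rw [Finset.sum_congr rfl (fun σ _ => Equiv.prod_comp σ x), hx]
    simp [Fintype.card_perm]
  have hnone : permSum x ∅ = (n + 1).factorial := by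
    simp [permSum, Fintype.card_perm]
  have htop : powersetCard (n + 1) (univ : Finset (Fin (n + 1))) = {univ} := by
    have := Finset.powersetCard_self (univ : Finset (Fin (n + 1)))
    rwa [card_univ, Fintype.card_fin] at this
  rw [htop, powersetCard_zero, sum_singleton, sum_singleton] at hexp
  simp only [compl_empty, compl_univ, card_univ, Fintype.card_fin, prod_empty, card_empty,
    pow_zero, one_mul, hx, hall, hnone] at hexp
  refine Int.ModEq.symm ((Int.modEq_iff_dvd).2 ?_)
  change _ ∣ (Matrix.of fun j k => x j + d * x k).permanent - _
  rw [hexp]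
  convert hmid using 1
  ring
end

section
/- Let p be an odd prime and let d be an integer not divisible by p. Then per[j+dk]_{1≤j,k≤p−1} ≡ 2 (mod p), and per[j²+dk²]_{1≤j,k≤(p−1)/2} ≡ (−1)^{(p+1)/2}·(1 + (d/p))·((p−1)/2)! (mod p), where (d/p) denotes the Legendre symbol; here per[j+dk]_{1≤j,k≤p−1} is the permanent of the (p−1)×(p−1) integer matrix with (j,k)-entry j + d·k, and per[j²+dk²]_{1≤j,k≤(p−1)/2} is the permanent of the ((p−1)/2)×((p−1)/2) integer matrix with (j,k)-entry j² + d·k². -/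
/-!
Both matrices have the form `[x_j + d x_k]` where, modulo `p`, the `x_j` run over all `n`-th roots
of unity in `ZMod p`, with `n = p - 1` for the first matrix (`x_j = j`) and `n = (p - 1) / 2` for
the second (`x_j = j ^ 2`).

Expanding the product over subsets `S` of the index set, the permanent becomes
`∑ S, (∑ σ, ∏ i ∈ S, x (σ i)) * ∏ i ∉ S, d * x i`. Multiplication by a primitive `n`-th root of
unity `g` permutes the `x_i`, so the inner sum is invariant under multiplication by `g ^ |S|` and
vanishes unless `S` is empty or everything (`sum_perm_prod_eq_zero`). Only two terms remain, and
`per [x_j + d x_k] = n! * (∏ x_i) * (1 + d ^ n)` (`sum_perm_prod_add`). Since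
`∏ (X - x_i) = X ^ n - 1`, the product of the `x_i` is `(-1) ^ (n + 1)`. The theorem then follows
from Fermat's little theorem and Wilson's theorem in the first case, and from Euler's criterion in
the second.
-/

/-- If multiplication by `g` permutes the family `x`, reindexing the sum multiplies it by
`g ^ |S|`. -/
lemma sum_perm_prod_eq_zero {K ι : Type*} [Field K] [Fintype ι] [DecidableEq ι]
    (x : ι → K) (g : K) (π : Equiv.Perm ι) (hπ : ∀ i, x (π i) = g * x i)
    (S : Finset ι) (hg : g ^ S.card ≠ 1) :
    ∑ σ : Equiv.Perm ι, ∏ i ∈ S, x (σ i) = 0 := by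
  have h : ∑ σ : Equiv.Perm ι, ∏ i ∈ S, x (σ i)
      = g ^ S.card * ∑ σ : Equiv.Perm ι, ∏ i ∈ S, x (σ i) := by
    conv_lhs => rw [← Equiv.sum_comp (Equiv.mulLeft π)]
    rw [Finset.mul_sum]
    refine Finset.sum_congr rfl fun σ _ => ?_
    simp [hπ, Finset.prod_mul_distrib]
  by_contra h0
  exact hg ((mul_eq_right₀ h0).1 h.symm)

lemma sum_perm_prod_add {K ι : Type*} [Field K] [Fintype ι] [DecidableEq ι] [Nonempty ι]
    (x : ι → K) (g d : K) (π : Equiv.Perm ι) (hπ : ∀ i, x (π i) = g * x i)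
    (hg : IsPrimitiveRoot g (Fintype.card ι)) :
    ∑ σ : Equiv.Perm ι, ∏ i, (x (σ i) + d * x i)
      = (Fintype.card ι).factorial * (∏ i, x i) * (1 + d ^ Fintype.card ι) := by
  have hne : (∅ : Finset ι) ≠ Finset.univ := Finset.univ_nonempty.ne_empty.symm
  simp_rw [Finset.prod_add]
  rw [Finset.sum_comm]
  simp_rw [← Finset.sum_mul]
  rw [← Finset.sum_subset (Finset.subset_univ {∅, Finset.univ} |>.trans
      (Finset.powerset_univ (α := ι)).symm.subset), Finset.sum_pair hne]
  · have h1 : ∀ σ : Equiv.Perm ι, ∏ i, x (σ i) = ∏ i, x i := fun σ => Equiv.prod_comp σ x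
    simp only [h1, Finset.prod_mul_distrib, Finset.prod_const, Finset.sum_const,
      Finset.prod_empty, Finset.sdiff_empty, Finset.sdiff_self, Finset.card_univ, Finset.card_empty, pow_zero,
      Fintype.card_perm, nsmul_eq_mul, mul_one]
    ring
  · intro S _ hS
    simp only [Finset.mem_insert, Finset.mem_singleton, not_or] at hS
    rw [sum_perm_prod_eq_zero x g π hπ S, zero_mul]
    refine hg.pow_ne_one_of_pos_of_lt ?_ ?_
    · simpa using hS.1
    · exact (Finset.card_lt_iff_ne_univ S).2 hS.2

/-- An injective family of `n` many `n`-th roots of unity exhausts them all, which provides the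
permutation needed above and the value of the product. -/
lemma sum_perm_prod_add_of_rootsOfUnity {K ι : Type*} [Field K] [Fintype ι] [DecidableEq ι]
    [Nonempty ι] (x : ι → K) (hx : Function.Injective x) (hx1 : ∀ i, x i ^ Fintype.card ι = 1)
    (g d : K) (hg : IsPrimitiveRoot g (Fintype.card ι)) :
    ∑ σ : Equiv.Perm ι, ∏ i, (x (σ i) + d * x i)
      = (Fintype.card ι).factorial * (-1) ^ (Fintype.card ι + 1)
        * (1 + d ^ Fintype.card ι) := by
  classical
  have hpos : 0 < Fintype.card ι := Fintype.card_pos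
  have himg : Finset.univ.image x = Polynomial.nthRootsFinset (Fintype.card ι) (1 : K) := by
    refine Finset.eq_of_subset_of_card_le ?_ ?_
    · intro y hy
      obtain ⟨i, -, rfl⟩ := Finset.mem_image.1 hy
      exact (Polynomial.mem_nthRootsFinset hpos _).2 (hx1 i)
    · rw [hg.card_nthRootsFinset, Finset.card_image_of_injective _ hx, Finset.card_univ]
  have hex : ∀ i, ∃ j, x j = g * x i := by
    intro i
    have : g * x i ∈ Finset.univ.image x := by
      rw [himg, Polynomial.mem_nthRootsFinset hpos, mul_pow, hg.pow_eq_one, hx1, one_mul]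
    simpa using this
  choose f hf using hex
  have hfinj : Function.Injective f := by
    intro i j hij
    apply hx
    have := hf i
    rw [hij, hf j] at this
    exact (mul_left_cancel₀ (hg.ne_zero hpos.ne') this).symm
  have hprod : ∏ i, x i = (-1) ^ (Fintype.card ι + 1) := by
    have h := congrArg (Polynomial.eval 0) (Polynomial.X_pow_sub_one_eq_prod hpos hg)
    rw [← himg, Finset.prod_image hx.injOn, Polynomial.eval_prod] at h
    simp [hpos.ne', Finset.prod_neg] at h
    have h2 : ((-1 : K) ^ Fintype.card ι) * (-1) ^ Fintype.card ι = 1 := by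
      rw [← mul_pow]; simp
    linear_combination (-(-1 : K) ^ Fintype.card ι) * h - (∏ i, x i) * h2
  rw [sum_perm_prod_add x g d (Equiv.ofBijective f (Finite.injective_iff_bijective.1 hfinj))
    (fun i => hf i) hg, hprod]

lemma exists_primitiveRoot_zmod (p : ℕ) [Fact p.Prime] :
    ∃ g : ZMod p, IsPrimitiveRoot g (p - 1) := by
  obtain ⟨u, hu⟩ := IsCyclic.exists_generator (α := (ZMod p)ˣ)
  refine ⟨u, IsPrimitiveRoot.coe_units_iff.2 ?_⟩
  rw [← ZMod.card_units p, ← Nat.card_eq_fintype_card, ← orderOf_eq_card_of_forall_mem_zpowers hu]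
  exact IsPrimitiveRoot.orderOf u

lemma natCast_zmod_ne_zero {p a : ℕ} (h0 : 0 < a) (h : a < p) : (a : ZMod p) ≠ 0 := by
  rw [Ne, ZMod.natCast_eq_zero_iff]
  exact Nat.not_dvd_of_pos_of_lt h0 h

/-- Let `p` be an odd prime and `d` an integer not divisible by `p`. Then
`per [j + d*k]_{1 ≤ j,k ≤ p-1} ≡ 2 (mod p)` and
`per [j² + d*k²]_{1 ≤ j,k ≤ (p-1)/2}
  ≡ (-1)^((p+1)/2) * (1 + (d/p)) * ((p-1)/2)! (mod p)`,
where `(d/p)` is the Legendre symbol. -/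
theorem permanent_add_mul_and_sq_add_mul_sq_mod_p (p : ℕ) [Fact p.Prime] (hodd : Odd p)
    (d : ℤ) (hd : ¬ (p : ℤ) ∣ d) :
    ((Matrix.of fun j k : Fin (p - 1) =>
        ((j : ℕ) + 1 : ℤ) + d * ((k : ℕ) + 1 : ℤ)).permanent ≡ 2 [ZMOD (p : ℤ)]) ∧
    ((Matrix.of fun j k : Fin ((p - 1) / 2) =>
        ((j : ℕ) + 1 : ℤ) ^ 2 + d * ((k : ℕ) + 1 : ℤ) ^ 2).permanent
      ≡ (-1) ^ ((p + 1) / 2) * (1 + legendreSym p d) * (Nat.factorial ((p - 1) / 2) : ℤ)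
        [ZMOD (p : ℤ)]) := by
  have hp : p.Prime := Fact.out
  obtain ⟨m, hm⟩ := hodd
  have hm0 : 0 < m := by have := hp.two_le; omega
  have hp1 : p - 1 = 2 * m := by omega
  have hp2 : (p - 1) / 2 = m := by omega
  have hp3 : (p + 1) / 2 = m + 1 := by omega
  have hd0 : (d : ZMod p) ≠ 0 := by rwa [Ne, ZMod.intCast_zmod_eq_zero_iff_dvd]
  obtain ⟨g, hg⟩ := exists_primitiveRoot_zmod p
  constructor
  · have : Nonempty (Fin (p - 1)) := ⟨⟨0, by omega⟩⟩
    have key := sum_perm_prod_add_of_rootsOfUnity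
      (fun i : Fin (p - 1) => (((i : ℕ) + 1 : ℕ) : ZMod p)) ?_ ?_ g d (by simpa using hg)
    · rw [← ZMod.intCast_eq_intCast_iff]
      simp only [Matrix.permanent, Matrix.of_apply]
      push_cast at key ⊢
      rw [key, Fintype.card_fin, ZMod.wilsons_lemma, ZMod.pow_card_sub_one_eq_one hd0, hp1,
        pow_succ, pow_mul]
      norm_num
    · intro i j hij
      have h := (ZMod.natCast_eq_natCast_iff' _ _ _).1 hij
      rw [Nat.mod_eq_of_lt (by omega), Nat.mod_eq_of_lt (by omega)] at h
      exact Fin.ext (by omega)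
    · intro i
      rw [Fintype.card_fin]
      exact ZMod.pow_card_sub_one_eq_one (natCast_zmod_ne_zero (by omega) (by omega))
  · have : Nonempty (Fin ((p - 1) / 2)) := ⟨⟨0, by omega⟩⟩
    have key := sum_perm_prod_add_of_rootsOfUnity
      (fun i : Fin ((p - 1) / 2) => (((i : ℕ) + 1 : ℕ) : ZMod p) ^ 2) ?_ ?_ (g ^ 2) d
      (by rw [Fintype.card_fin, hp2]; exact hg.pow (by omega) hp1)
    · rw [← ZMod.intCast_eq_intCast_iff]
      simp only [Matrix.permanent, Matrix.of_apply]
      have hp4 : p / 2 = m := by omega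
      push_cast at key ⊢
      rw [key, Fintype.card_fin, legendreSym.eq_pow, hp2, hp3, hp4]
      ring
    · intro i j hij
      have hi := i.2
      have hj := j.2
      rcases sq_eq_sq_iff_eq_or_eq_neg.1 hij with h | h
      · have h := (ZMod.natCast_eq_natCast_iff' _ _ _).1 h
        rw [Nat.mod_eq_of_lt (by omega), Nat.mod_eq_of_lt (by omega)] at h
        exact Fin.ext (by omega)
      · -- `i + j + 2` lies strictly between `0` and `p`, so it is nonzero modulo `p`.
        rw [eq_neg_iff_add_eq_zero, ← Nat.cast_add] at h
        exact absurd h (natCast_zmod_ne_zero (by omega) (by omega))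
    · intro i
      rw [Fintype.card_fin, ← pow_mul, show 2 * ((p - 1) / 2) = p - 1 by omega]
      exact ZMod.pow_card_sub_one_eq_one (natCast_zmod_ne_zero (by omega) (by omega))
end

section
/- Let n be a positive integer, let F be a field whose characteristic does not divide n, let ζ ∈ F be a primitive n-th root of unity, and let x ∈ F satisfy x^n ≠ 1 (so that 1 − ζ^{j-k}·x ≠ 0 for all j,k). Then the permanent of the n×n matrix with (j,k)-entry 1/(1 − ζ^{j-k}·x) (for 1 ≤ j,k ≤ n) equals ∏_{r=1}^{n} (n·x^n/(1 − x^n) + r), where n and r are interpreted via their images in F. -/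
/-!
For `x = 0` the matrix is constantly `1` and its permanent is `n!`. For `x ≠ 0` the proof rests on
Borchardt's identity for Cauchy-type matrices `C i j = 1 / (1 - u i * b j)`,
`det (C i j) * per (C i j) = det ((C i j) ^ 2)` (`det_mul_permanent_cauchy`), applied to
`u j = ζ ^ j * x`, `b k = ζ ^ (-k)`.

Borchardt's identity: the left side expands to `∑ σ, det (C i j * C (σ i) j)`. The term `σ = 1` is
the right side. For `σ ≠ 1` the rows of the matrix, weighted by `u i - u (σ i)`, become
`(C i j - C (σ i) j) / b j`, which sum to zero over `i`, so the determinant vanishes.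

Both determinants are computed from the finite geometric expansions
`1 / (1 - y) = ∑_{m<n} y ^ m / (1 - z)` and
`1 / (1 - y) ^ 2 = ∑_{m<n} y ^ m / (1 - z) * (n * z / (1 - z) + m + 1)`, valid when `y ^ n = z ≠ 1`.
With `y = ζ ^ (j - k) * x` and `z = x ^ n` they factor both matrices as
`Vandermonde * diagonal * Vandermonde`; the quotient of the two determinants is the product of the
factors `n * x ^ n / (1 - x ^ n) + m + 1`.
-/

/-- Borchardt's identity, for Cauchy matrices written multiplicatively. -/
theorem det_mul_permanent_cauchy {F ι : Type*} [Field F] [Fintype ι] [DecidableEq ι]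
    (u b : ι → F) (hu : Function.Injective u) (hb : ∀ j, b j ≠ 0)
    (h : ∀ i j, 1 - u i * b j ≠ 0) :
    (Matrix.of fun i j => (1 - u i * b j)⁻¹).det *
        (Matrix.of fun i j => (1 - u i * b j)⁻¹).permanent =
      (Matrix.of fun i j => ((1 - u i * b j)⁻¹) ^ 2).det := by
  have key : ∀ σ : Equiv.Perm ι, σ ≠ 1 →
      (Matrix.of fun i j => (1 - u i * b j)⁻¹ * (1 - u (σ i) * b j)⁻¹).det = 0 := by
    intro σ hσ
    rw [← Matrix.exists_vecMul_eq_zero_iff]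
    refine ⟨fun i => u i - u (σ i), ?_, ?_⟩
    · intro h0
      refine hσ (Equiv.ext fun i => ?_)
      exact (hu (sub_eq_zero.1 (congrFun h0 i))).symm
    · ext j
      simp only [Matrix.vecMul, dotProduct, Matrix.of_apply, Pi.zero_apply]
      have e : ∀ i, (u i - u (σ i)) * ((1 - u i * b j)⁻¹ * (1 - u (σ i) * b j)⁻¹)
          = (b j)⁻¹ * ((1 - u i * b j)⁻¹ - (1 - u (σ i) * b j)⁻¹) := by
        intro i
        have h1 := h i j
        have h2 := h (σ i) j
        have h3 := hb j
        rw [inv_sub_inv h1 h2]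
        field_simp
        ring
      rw [Finset.sum_congr rfl fun i _ => e i, ← Finset.mul_sum, Finset.sum_sub_distrib,
        Equiv.sum_comp σ (fun i => (1 - u i * b j)⁻¹), sub_self, mul_zero]
  have expand : (Matrix.of fun i j => (1 - u i * b j)⁻¹).det *
        (Matrix.of fun i j => (1 - u i * b j)⁻¹).permanent =
      ∑ σ : Equiv.Perm ι,
        (Matrix.of fun i j => (1 - u i * b j)⁻¹ * (1 - u (σ i) * b j)⁻¹).det := by
    simp only [Matrix.det_apply', Matrix.permanent, Matrix.of_apply]
    rw [Finset.sum_comm, Finset.sum_mul]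
    refine Finset.sum_congr rfl fun τ _ => ?_
    rw [← Equiv.sum_comp (Equiv.mulRight τ), Finset.mul_sum]
    refine Finset.sum_congr rfl fun σ _ => ?_
    simp only [Equiv.coe_mulRight, Equiv.Perm.mul_apply, Finset.prod_mul_distrib, mul_assoc]
  rw [expand, Finset.sum_eq_single 1 (fun σ _ hσ => key σ hσ) (by simp)]
  simp only [Equiv.Perm.one_apply, ← pow_two]

theorem inv_one_sub_eq_sum {F : Type*} [Field F] (n : ℕ) (y z : F) (hy : y ^ n = z)
    (hz : 1 - z ≠ 0) (h1 : 1 - y ≠ 0) :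
    (1 - y)⁻¹ = ∑ m ∈ Finset.range n, y ^ m * (1 - z)⁻¹ := by
  have hg := mul_neg_geom_sum y n
  rw [hy] at hg
  rw [← Finset.sum_mul]
  field_simp
  linear_combination -hg

theorem inv_one_sub_sq_eq_sum {F : Type*} [Field F] (n : ℕ) (y z : F) (hy : y ^ n = z)
    (hz : 1 - z ≠ 0) (h1 : 1 - y ≠ 0) :
    ((1 - y)⁻¹) ^ 2 = ∑ m ∈ Finset.range n,
      y ^ m * ((1 - z)⁻¹ * ((n : F) * z / (1 - z) + ((m : F) + 1))) := by
  have hg := mul_neg_geom_sum y n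
  have hs : (1 - y) * ∑ m ∈ Finset.range n, y ^ m * ((m : F) + 1)
      = ∑ m ∈ Finset.range n, y ^ m - n * y ^ n := by
    clear hg hy
    induction n with
    | zero => simp
    | succ k ih =>
      rw [Finset.sum_range_succ, mul_add, ih, Finset.sum_range_succ]
      push_cast
      ring
  rw [hy] at hg hs
  have e : ∑ m ∈ Finset.range n, y ^ m * ((1 - z)⁻¹ * ((n : F) * z / (1 - z) + ((m : F) + 1)))
      = (1 - z)⁻¹ * ((n : F) * z / (1 - z) * ∑ m ∈ Finset.range n, y ^ m
        + ∑ m ∈ Finset.range n, y ^ m * ((m : F) + 1)) := by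
    rw [Finset.mul_sum, ← Finset.sum_add_distrib, Finset.mul_sum]
    refine Finset.sum_congr rfl fun m _ => ?_
    ring
  rw [e]
  have h2 : ∑ m ∈ Finset.range n, y ^ m = (1 - z) / (1 - y) := by
    rw [eq_div_iff h1, mul_comm, hg]
  have h3 : ∑ m ∈ Finset.range n, y ^ m * ((m : F) + 1)
      = ((1 - z) / (1 - y) - n * z) / (1 - y) := by
    rw [eq_div_iff h1, mul_comm, hs, h2]
  rw [h2, h3]
  field_simp
  ring

/-- Let `ζ` be a primitive `n`-th root of unity in a field `F` whose characteristic does not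
divide `n`, and let `x ∈ F` with `x^n ≠ 1`. Then
`per [1 / (1 - ζ^(j-k) * x)]_{1 ≤ j,k ≤ n} = ∏_{r=1}^{n} (n * x^n / (1 - x^n) + r)`. -/
theorem permanent_inv_one_sub_primitiveRoot_zpow_mul {F : Type*} [Field F] (n : ℕ)
    (hn : 0 < n) (hchar : ¬ (ringChar F : ℕ) ∣ n) (ζ : F) (hζ : IsPrimitiveRoot ζ n)
    (x : F) (hx : x ^ n ≠ 1) :
    (Matrix.of fun j k : Fin n =>
        (1 - ζ ^ (((j : ℕ) : ℤ) - ((k : ℕ) : ℤ)) * x)⁻¹).permanent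
      = ∏ r ∈ Finset.range n, ((n : F) * x ^ n / (1 - x ^ n) + ((r : F) + 1)) := by
  rcases eq_or_ne x 0 with rfl | hx0
  · have hprod := Finset.prod_range_add_one_eq_factorial n
    simp only [Matrix.permanent, Matrix.of_apply, mul_zero, sub_zero, inv_one,
      Finset.prod_const_one, Finset.sum_const, zero_pow hn.ne', zero_div, zero_add]
    rw [Finset.card_univ, Fintype.card_perm, Fintype.card_fin, ← hprod, nsmul_one]
    push_cast
    rfl
  have hζ0 : ζ ≠ 0 := hζ.ne_zero hn.ne'
  have hz : 1 - x ^ n ≠ 0 := sub_ne_zero.2 hx.symm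
  have hinj : Function.Injective fun j : Fin n => ζ ^ (j : ℕ) := fun i j hij =>
    Fin.ext (hζ.pow_inj i.2 j.2 hij)
  set u : Fin n → F := fun j => ζ ^ (j : ℕ) * x with hu
  set b : Fin n → F := fun k => (ζ ^ (k : ℕ))⁻¹ with hb
  have hui : Function.Injective u := fun i j hij => hinj (mul_right_cancel₀ hx0 hij)
  have hbi : Function.Injective b := fun i j hij => hinj (inv_injective hij)
  have hb0 : ∀ j, b j ≠ 0 := fun j => inv_ne_zero (pow_ne_zero _ hζ0)
  have hpow : ∀ i j, (u i * b j) ^ n = x ^ n := by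
    intro i j
    simp only [hu, hb, mul_pow, inv_pow, ← pow_mul, mul_comm _ n]
    simp only [pow_mul, hζ.pow_eq_one, one_pow, inv_one, mul_one, one_mul]
  have hne : ∀ i j, 1 - u i * b j ≠ 0 := by
    intro i j h0
    apply hx
    rw [← hpow i j, ← sub_eq_zero.1 h0, one_pow]
  have hM : (Matrix.of fun j k : Fin n => (1 - ζ ^ (((j : ℕ) : ℤ) - ((k : ℕ) : ℤ)) * x)⁻¹)
      = Matrix.of fun i j => (1 - u i * b j)⁻¹ := by
    ext i j
    simp only [Matrix.of_apply, hu, hb, zpow_sub₀ hζ0, zpow_natCast]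
    congr 2
    ring
  have hB := det_mul_permanent_cauchy u b hui hb0 hne
  have hC : (Matrix.of fun i j => (1 - u i * b j)⁻¹)
      = Matrix.vandermonde u * Matrix.diagonal (fun _ => (1 - x ^ n)⁻¹)
        * (Matrix.vandermonde b).transpose := by
    ext i j
    rw [Matrix.mul_apply, Matrix.of_apply, inv_one_sub_eq_sum n _ _ (hpow i j) hz (hne i j),
      Finset.sum_range]
    refine Finset.sum_congr rfl fun m _ => ?_
    rw [Matrix.mul_diagonal, Matrix.transpose_apply, Matrix.vandermonde_apply,
      Matrix.vandermonde_apply, mul_pow]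
    ring
  have hC2 : (Matrix.of fun i j => ((1 - u i * b j)⁻¹) ^ 2)
      = Matrix.vandermonde u * Matrix.diagonal (fun m : Fin n => (1 - x ^ n)⁻¹ *
          ((n : F) * x ^ n / (1 - x ^ n) + (((m : ℕ) : F) + 1)))
        * (Matrix.vandermonde b).transpose := by
    ext i j
    rw [Matrix.mul_apply, Matrix.of_apply, inv_one_sub_sq_eq_sum n _ _ (hpow i j) hz (hne i j),
      Finset.sum_range]
    refine Finset.sum_congr rfl fun m _ => ?_
    rw [Matrix.mul_diagonal, Matrix.transpose_apply, Matrix.vandermonde_apply,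
      Matrix.vandermonde_apply, mul_pow]
    ring
  have hdet : (Matrix.of fun i j => (1 - u i * b j)⁻¹).det ≠ 0 := by
    rw [hC, Matrix.det_mul, Matrix.det_mul, Matrix.det_diagonal, Matrix.det_transpose]
    exact mul_ne_zero (mul_ne_zero (Matrix.det_vandermonde_ne_zero_iff.2 hui)
      (Finset.prod_ne_zero_iff.2 fun _ _ => inv_ne_zero hz))
      (Matrix.det_vandermonde_ne_zero_iff.2 hbi)
  rw [hM]
  apply mul_left_cancel₀ hdet
  rw [hB, hC2, hC]
  simp only [Matrix.det_mul, Matrix.det_diagonal, Matrix.det_transpose, Finset.prod_mul_distrib,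
    Finset.prod_range]
  ring
end

section
/- For every odd integer n > 1, the real number T(n) := per[tan(π(j+k)/n)]_{1≤j,k≤n−1}, the permanent of the (n−1)×(n−1) matrix with (j,k)-entry tan(π(j+k)/n), is a (rational) integer. Moreover, for every odd prime p, this integer satisfies T(p) ≡ (−1)^{(p+1)/2}·2p (mod p²). -/
/-!
Let `ζ = e^{2πi/n}` with `n` odd. For an `n`-th root of unity `x = e^{2iθ}` one has
`i tan θ = (x - 1)/(x + 1) = x - x² + ⋯ - x^(n-1)`, so up to the sign `i^(n-1)` the tangent permanent
is the value at `ζ` of an integer polynomial `P`, the permanent of the polynomials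
`altPoly n (X^(j+k))`.

Integrality: replacing `ζ` by `ζ^a` with `a` coprime to `n` permutes rows and columns, so `P` takes
the same value at all primitive `n`-th roots of unity. The remainder of `P` modulo the cyclotomic
polynomial `Φ_n` has degree less than the number of these roots, hence is a constant `M ∈ ℤ`.

Congruence, for `n = p` prime: each entry vanishes at `X = 1`, so `P = (X - 1)^(p-1) Q`. Comparing
derivatives at `1`, where `altPoly p` has derivative `(1 - p)/2`, gives
`Q(1) ≡ 2^{-(p-1)} per[j + k] ≡ per[j + k] (mod p)`. Expanding that permanent over the units of
`ZMod p`, every mixed term vanishes by scaling with a generator, and the two extreme terms give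
`2 · (p-1)! · (p-1)! = 2` (`permanent_add_eq_two`). Moreover `(X - 1)^(p-1) = Φ_p + p h` with
`h(1) = -1`. Hence `p h Q - M` is a multiple `Φ_p R`; reducing modulo `p` forces `p ∣ R`, and
evaluation at `1`, where `Φ_p(1) = p`, yields `M ≡ p h(1) Q(1) ≡ -2p (mod p²)`.
-/

open Polynomial

/-! ### Tangents as values of integer polynomials -/

/-- The polynomial `X - X² + X³ - ⋯ - X^(n-1)` (for odd `n`); its value at an `n`-th root of unity
`e^{2iθ}` is `i tan θ`. -/
noncomputable def altPoly (n : ℕ) : ℤ[X] :=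
  ∑ i ∈ Finset.range (n - 1), (-1) ^ i * X ^ (i + 1)

/-- The permanent of `altPoly n (X ^ (j + k))`, `1 ≤ j, k ≤ n - 1`, over `ℤ[X]`; its value at
`e^{2πi/n}` is the tangent permanent up to sign. -/
noncomputable def permPoly (n : ℕ) : ℤ[X] :=
  (Matrix.of fun j k : Fin (n - 1) =>
    (altPoly n).comp (X ^ (((j : ℕ) + 1) + ((k : ℕ) + 1)))).permanent

lemma X_add_one_mul_altPoly {n : ℕ} (h1 : 1 < n) (hn : Odd n) :
    (X + 1) * altPoly n = X - X ^ n := by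
  have key : ∀ N : ℕ, (X + 1 : ℤ[X]) * ∑ i ∈ Finset.range N, (-1) ^ i * X ^ (i + 1)
      = X - (-1) ^ N * X ^ (N + 1) := by
    intro N
    induction N with
    | zero => simp
    | succ N ih => rw [Finset.sum_range_succ, mul_add, ih]; ring
  have hev : Even (n - 1) := by obtain ⟨k, rfl⟩ := hn; exact ⟨k, by omega⟩
  rw [altPoly, key, hev.neg_one_pow, one_mul, Nat.sub_add_cancel h1.le]

lemma aeval_permPoly {n : ℕ} (z : ℂ) :
    aeval z (permPoly n) = (Matrix.of fun j k : Fin (n - 1) =>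
      aeval (z ^ (((j : ℕ) + 1) + ((k : ℕ) + 1))) (altPoly n)).permanent := by
  simp [permPoly, Matrix.permanent, map_sum, map_prod, aeval_comp]

/-- `altPoly n` interpolates the tangent: `i tan (π m / n) = altPoly n (e^{2πim/n})`. -/
lemma aeval_altPoly_exp {n : ℕ} (h1 : 1 < n) (hn : Odd n) (m : ℕ) :
    aeval (Complex.exp (2 * Real.pi * Complex.I / n) ^ m) (altPoly n)
      = Complex.I * ((Real.tan (Real.pi * (m : ℝ) / (n : ℝ)) : ℝ) : ℂ) := by
  set x := Complex.exp (2 * Real.pi * Complex.I / n) ^ m with hx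
  have hxn : x ^ n = 1 := by
    rw [hx, ← pow_mul, mul_comm m, pow_mul,
      (Complex.isPrimitiveRoot_exp n (by omega)).pow_eq_one, one_pow]
  have hx1 : x + 1 ≠ 0 := by
    intro h
    have h' : x = -1 := eq_neg_of_add_eq_zero_left h
    rw [h', hn.neg_one_pow] at hxn
    norm_num at hxn
  have hF : (x + 1) * aeval x (altPoly n) = x - 1 := by
    have := congrArg (aeval x) (X_add_one_mul_altPoly h1 hn)
    simpa [hxn] using this
  set θ : ℂ := Real.pi * m / n with hθ
  have hxe : x = Complex.exp (θ * Complex.I) * Complex.exp (θ * Complex.I) := by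
    rw [hx, ← Complex.exp_nat_mul, ← Complex.exp_add]
    congr 1
    rw [hθ]; ring
  have hinv : Complex.exp (θ * Complex.I) * Complex.exp (-θ * Complex.I) = 1 := by
    rw [← Complex.exp_add]; simp
  have hcos : x + 1 = Complex.exp (θ * Complex.I) * (2 * Complex.cos θ) := by
    rw [Complex.two_cos, hxe, mul_add, hinv]
  have hsin : x - 1 = Complex.exp (θ * Complex.I) * (2 * Complex.sin θ) * Complex.I := by
    rw [Complex.two_sin, hxe]
    linear_combination (Complex.exp (θ * Complex.I) * Complex.exp (θ * Complex.I) - 1) *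
      Complex.I_sq - Complex.I ^ 2 * hinv
  have hc0 : Complex.cos θ ≠ 0 := by
    intro h; rw [hcos, h] at hx1; simp at hx1
  have htan : ((Real.tan (Real.pi * (m : ℝ) / (n : ℝ)) : ℝ) : ℂ)
      = Complex.sin θ / Complex.cos θ := by
    rw [Complex.ofReal_tan, Complex.tan_eq_sin_div_cos, hθ]
    push_cast
    rfl
  apply mul_left_cancel₀ hx1
  rw [hF, hsin, hcos, htan]
  field_simp

/-- The tangent permanent is `(-1)^((n-1)/2)` times the value of `permPoly n` at `e^{2πi/n}`. -/
lemma aeval_permPoly_exp {n : ℕ} (h1 : 1 < n) (hn : Odd n) :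
    aeval (Complex.exp (2 * Real.pi * Complex.I / n)) (permPoly n)
      = (-1) ^ ((n - 1) / 2) * (((Matrix.of fun j k : Fin (n - 1) =>
          Real.tan (Real.pi * ((((j : ℕ) + 1) + ((k : ℕ) + 1) : ℕ) : ℝ) / (n : ℝ))).permanent : ℝ)
            : ℂ) := by
  have hI : Complex.I ^ (n - 1) = (-1) ^ ((n - 1) / 2) := by
    obtain ⟨k, rfl⟩ := hn
    rw [Nat.add_sub_cancel, pow_mul, Complex.I_sq, Nat.mul_div_cancel_left _ two_pos]
  rw [aeval_permPoly]
  simp only [Matrix.permanent, Matrix.of_apply, aeval_altPoly_exp h1 hn, Finset.prod_mul_distrib,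
    Finset.prod_const, Finset.card_univ, Fintype.card_fin, hI, ← Finset.mul_sum]
  congr 1
  simp only [Complex.ofReal_sum, Complex.ofReal_prod]

/-! ### Integrality -/

/-- Multiplication by `a` coprime to `n` permutes the nonzero residues modulo `n`. -/
lemma exists_perm_mul {n a : ℕ} (h1 : 1 < n) (ha : a.Coprime n) :
    ∃ e : Equiv.Perm (Fin (n - 1)), ∀ j, ((e j : ℕ) + 1) ≡ a * ((j : ℕ) + 1) [MOD n] := by
  have hpos : ∀ j : Fin (n - 1), 0 < (a * ((j : ℕ) + 1)) % n := by
    intro j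
    rw [Nat.pos_iff_ne_zero]
    intro h
    have h2 := ha.symm.dvd_of_dvd_mul_left (Nat.dvd_of_mod_eq_zero h)
    have := Nat.le_of_dvd (by omega) h2
    have := j.2
    omega
  have hlt : ∀ j : Fin (n - 1), (a * ((j : ℕ) + 1)) % n < n := fun j => Nat.mod_lt _ (by omega)
  let f : Fin (n - 1) → Fin (n - 1) := fun j =>
    ⟨(a * ((j : ℕ) + 1)) % n - 1, by have := hpos j; have := hlt j; omega⟩
  have hf : ∀ j, ((f j : ℕ) + 1) = (a * ((j : ℕ) + 1)) % n := fun j => by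
    have := hpos j
    simp only [f]
    omega
  have hinj : Function.Injective f := by
    intro j k hjk
    have h : a * ((j : ℕ) + 1) ≡ a * ((k : ℕ) + 1) [MOD n] := by
      rw [Nat.ModEq, ← hf, ← hf, hjk]
    have h2 := Nat.ModEq.cancel_left_of_coprime (by rw [Nat.gcd_comm]; exact ha) h
    have h3 := Nat.ModEq.eq_of_lt_of_lt h2 (by have := j.2; omega) (by have := k.2; omega)
    exact Fin.ext (by omega)
  refine ⟨Equiv.ofBijective f (Finite.injective_iff_bijective.mp hinj), fun j => ?_⟩
  rw [Equiv.ofBijective_apply, hf]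
  exact Nat.mod_modEq _ _

/-- `permPoly n` takes the same value at all primitive `n`-th roots of unity. -/
lemma aeval_permPoly_primitiveRoot {n : ℕ} (h1 : 1 < n) {z w : ℂ} (hz : IsPrimitiveRoot z n)
    (hw : IsPrimitiveRoot w n) : aeval w (permPoly n) = aeval z (permPoly n) := by
  have : NeZero n := ⟨by omega⟩
  obtain ⟨a, -, ha, rfl⟩ := hz.isPrimitiveRoot_iff.mp hw
  obtain ⟨e, he⟩ := exists_perm_mul h1 ha
  rw [aeval_permPoly, aeval_permPoly z]
  conv_rhs => rw [← Matrix.permanent_permute_cols e, ← Matrix.permanent_permute_rows e,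
    Matrix.submatrix_submatrix]
  congr 1
  ext j k
  simp only [Matrix.of_apply, Matrix.submatrix_apply, Function.comp, id]
  have h : a * (((j : ℕ) + 1) + ((k : ℕ) + 1)) ≡ ((e j : ℕ) + 1) + ((e k : ℕ) + 1) [MOD n] := by
    rw [mul_add]
    exact ((he j).add (he k)).symm
  have hpow : (z ^ a) ^ (((j : ℕ) + 1) + ((k : ℕ) + 1))
      = z ^ (((e j : ℕ) + 1) + ((e k : ℕ) + 1)) := by
    rw [← pow_mul, pow_eq_pow_mod _ hz.pow_eq_one, h, ← pow_eq_pow_mod _ hz.pow_eq_one]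
  rw [hpow]

/-- An integer polynomial with the same value at all primitive `n`-th roots of unity is congruent
to an integer constant modulo the `n`-th cyclotomic polynomial: its remainder has degree below
the number `φ(n)` of these roots. -/
lemma exists_eq_cyclotomic_mul_add_C {n : ℕ} (hn : 0 < n) (P : ℤ[X]) (c : ℂ)
    (hP : ∀ w : ℂ, IsPrimitiveRoot w n → aeval w P = c) :
    ∃ (S : ℤ[X]) (M : ℤ), P = cyclotomic n ℤ * S + C M := by
  have hdiv := modByMonic_add_div P (cyclotomic n ℤ)
  set r := P %ₘ cyclotomic n ℤ with hr
  have hcard : (primitiveRoots n ℂ).card = n.totient := Complex.card_primitiveRoots n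
  have hdeg : (r.map (Int.castRingHom ℂ)).degree < ((primitiveRoots n ℂ).card : ℕ) := by
    rw [hcard, ← degree_cyclotomic n ℤ]
    exact degree_map_le.trans_lt (degree_modByMonic_lt P (cyclotomic.monic n ℤ))
  have hdeg' : (C c : ℂ[X]).degree < ((primitiveRoots n ℂ).card : ℕ) := by
    rw [hcard]
    exact degree_C_le.trans_lt (by exact_mod_cast Nat.totient_pos.mpr hn)
  have hrc : r.map (Int.castRingHom ℂ) = C c := by
    refine eq_of_degrees_lt_of_eval_finset_eq (primitiveRoots n ℂ) hdeg hdeg' fun w hw => ?_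
    have hw' := (mem_primitiveRoots hn).mp hw
    have hroot : aeval w (cyclotomic n ℤ) = 0 := by
      have := hw'.isRoot_cyclotomic hn
      rw [IsRoot.def, ← map_cyclotomic_int, eval_map] at this
      simpa [aeval_def] using this
    have h := hP w hw'
    rw [← hdiv, map_add, map_mul, hroot, zero_mul, add_zero] at h
    rw [eval_C, ← h, eval_map, aeval_def]
    rfl
  have hrC : r = C (r.coeff 0) := by
    apply map_injective (Int.castRingHom ℂ) (RingHom.injective_int _)
    have h0 := congrArg (fun q => coeff q 0) hrc
    simp only [coeff_map, coeff_C_zero] at h0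
    rw [map_C, h0, hrc]
  exact ⟨P /ₘ cyclotomic n ℤ, r.coeff 0, by rw [← hrC, add_comm]; exact hdiv.symm⟩

/-- `permPoly n` is an integer constant `M` modulo the cyclotomic polynomial, and the tangent
permanent is `M` up to sign. -/
lemma exists_permPoly_eq {n : ℕ} (h1 : 1 < n) (hn : Odd n) :
    ∃ (S : ℤ[X]) (M : ℤ), permPoly n = cyclotomic n ℤ * S + C M ∧
      (Matrix.of fun j k : Fin (n - 1) =>
          Real.tan (Real.pi * ((((j : ℕ) + 1) + ((k : ℕ) + 1) : ℕ) : ℝ) / (n : ℝ))).permanent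
        = (((-1) ^ ((n - 1) / 2) * M : ℤ) : ℝ) := by
  have hz := Complex.isPrimitiveRoot_exp n (by omega)
  obtain ⟨S, M, h⟩ := exists_eq_cyclotomic_mul_add_C (by omega) (permPoly n) _
    fun w hw => aeval_permPoly_primitiveRoot h1 hz hw
  refine ⟨S, M, h, ?_⟩
  have hT := aeval_permPoly_exp h1 hn
  have hroot : aeval (Complex.exp (2 * Real.pi * Complex.I / n)) (cyclotomic n ℤ) = 0 := by
    have := hz.isRoot_cyclotomic (by omega)
    rw [IsRoot.def, ← map_cyclotomic_int, eval_map] at this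
    simpa [aeval_def] using this
  rw [h, map_add, map_mul, hroot, zero_mul, zero_add, aeval_C] at hT
  have hs : ((-1 : ℂ) ^ ((n - 1) / 2)) * (-1) ^ ((n - 1) / 2) = 1 := by
    rw [← mul_pow]; simp
  apply Complex.ofReal_injective
  push_cast
  have hM : (algebraMap ℤ ℂ) M = (M : ℂ) := rfl
  rw [← hM, hT, ← mul_assoc, hs, one_mul]
  push_cast
  rfl

/-! ### The permanent of `[j + k]` modulo `p` -/

/-- Summing over all permutations kills mixed monomials: scaling the units by a generator `g`
multiplies the sum by `g ^ |S| ≠ 1`. -/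
lemma sum_perm_prod_units_eq_zero {p : ℕ} [Fact p.Prime] (S : Finset (ZMod p)ˣ)
    (h0 : S.Nonempty) (h1 : S ≠ Finset.univ) :
    ∑ σ : Equiv.Perm (ZMod p)ˣ, ∏ u ∈ S, ((σ u : (ZMod p)ˣ) : ZMod p) = 0 := by
  obtain ⟨g, hg⟩ := IsCyclic.exists_generator (α := (ZMod p)ˣ)
  have hord : orderOf g = Fintype.card (ZMod p)ˣ := by
    rw [orderOf_eq_card_of_forall_mem_zpowers hg, Nat.card_eq_fintype_card]
  have hlt : S.card < orderOf g := by
    rw [hord]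
    exact Finset.card_lt_univ_of_notMem (not_forall.mp
      fun h => h1 (Finset.eq_univ_iff_forall.mpr h)).choose_spec
  have hne : (g : ZMod p) ^ S.card ≠ 1 := by
    intro h
    exact pow_ne_one_of_lt_orderOf h0.card_pos.ne' hlt (Units.ext (by simpa using h))
  have hinv : ∑ σ : Equiv.Perm (ZMod p)ˣ, ∏ u ∈ S, ((σ u : (ZMod p)ˣ) : ZMod p)
      = (g : ZMod p) ^ S.card *
        ∑ σ : Equiv.Perm (ZMod p)ˣ, ∏ u ∈ S, ((σ u : (ZMod p)ˣ) : ZMod p) := by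
    conv_lhs => rw [← (Group.mulLeft_bijective (Equiv.mulLeft g : Equiv.Perm (ZMod p)ˣ)).sum_comp]
    rw [Finset.mul_sum]
    refine Finset.sum_congr rfl fun σ _ => ?_
    simp [Finset.prod_mul_distrib]
  have h : ((g : ZMod p) ^ S.card - 1) *
      ∑ σ : Equiv.Perm (ZMod p)ˣ, ∏ u ∈ S, ((σ u : (ZMod p)ˣ) : ZMod p) = 0 := by
    rw [sub_mul, one_mul, ← hinv, sub_self]
  exact (mul_eq_zero.mp h).resolve_left (sub_ne_zero.mpr hne)

lemma sum_perm_prod_units_add {p : ℕ} [Fact p.Prime] :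
    ∑ σ : Equiv.Perm (ZMod p)ˣ, ∏ u, (((σ u : (ZMod p)ˣ) : ZMod p) + (u : ZMod p)) = 2 := by
  have hprod : ∏ u : (ZMod p)ˣ, (u : ZMod p) = -1 := by
    rw [← Units.coe_prod, FiniteField.prod_univ_units_id_eq_neg_one]; simp
  have hcard : ((Fintype.card (Equiv.Perm (ZMod p)ˣ) : ℕ) : ZMod p) = -1 := by
    rw [Fintype.card_perm, ZMod.card_units, ZMod.wilsons_lemma]
  have hne : (∅ : Finset (ZMod p)ˣ) ≠ Finset.univ := Finset.univ_nonempty.ne_empty.symm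
  simp only [Finset.prod_add, Finset.powerset_univ]
  rw [Finset.sum_comm]
  simp only [← Finset.sum_mul]
  rw [Finset.sum_eq_add (∅ : Finset (ZMod p)ˣ) Finset.univ hne]
  · have h2 : ∀ σ : Equiv.Perm (ZMod p)ˣ, ∏ u, ((σ u : (ZMod p)ˣ) : ZMod p) = -1 := fun σ => by
      rw [Equiv.prod_comp σ (fun u : (ZMod p)ˣ => (u : ZMod p)), hprod]
    simp only [h2, Finset.prod_empty, Finset.sum_const, Finset.card_univ, nsmul_eq_mul, hcard,
      Finset.sdiff_empty, hprod, Finset.sdiff_self]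
    norm_num
  · rintro S - ⟨hS0, hS1⟩
    rw [sum_perm_prod_units_eq_zero S (Finset.nonempty_iff_ne_empty.mpr hS0) hS1, zero_mul]
  · simp
  · simp

/-- The permanent of `[j + k]`, `1 ≤ j, k ≤ p - 1`, is `2` modulo `p`. -/
lemma permanent_add_eq_two {p : ℕ} [Fact p.Prime] :
    (Matrix.of fun j k : Fin (p - 1) =>
      (((((j : ℕ) + 1) + ((k : ℕ) + 1) : ℕ)) : ZMod p)).permanent = 2 := by
  have hu : ∀ j : Fin (p - 1), IsUnit ((((j : ℕ) + 1 : ℕ)) : ZMod p) := by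
    intro j
    rw [isUnit_iff_ne_zero, Ne, ZMod.natCast_eq_zero_iff]
    intro h
    have := Nat.le_of_dvd (by omega) h
    have := j.2
    omega
  have hbij : Function.Bijective fun j : Fin (p - 1) => (hu j).unit := by
    rw [Fintype.bijective_iff_injective_and_card]
    refine ⟨fun j k h => ?_, by rw [Fintype.card_fin, ZMod.card_units]⟩
    have h' : ((((j : ℕ) + 1 : ℕ)) : ZMod p) = (((k : ℕ) + 1 : ℕ)) := congrArg Units.val h
    rw [ZMod.natCast_eq_natCast_iff] at h'
    have := Nat.ModEq.eq_of_lt_of_lt h' (by have := j.2; omega) (by have := k.2; omega)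
    exact Fin.ext (by omega)
  let e := Equiv.ofBijective _ hbij
  have he : ∀ j, ((e j : (ZMod p)ˣ) : ZMod p) = (((j : ℕ) + 1 : ℕ)) := fun j => rfl
  rw [← sum_perm_prod_units_add, Matrix.permanent]
  refine Fintype.sum_equiv e.permCongr _ _ fun σ => ?_
  refine Fintype.prod_equiv e _ _ fun j => ?_
  simp only [Equiv.permCongr_apply, Equiv.symm_apply_apply, he, Matrix.of_apply]
  push_cast
  ring

/-! ### The congruence modulo `p²` -/

lemma two_mul_eval_derivative_altPoly {n : ℕ} (h1 : 1 < n) (hn : Odd n) :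
    eval 1 (altPoly n) = 0 ∧ 2 * eval 1 (derivative (altPoly n)) = 1 - n := by
  have h := X_add_one_mul_altPoly h1 hn
  have h0 : eval 1 (altPoly n) = 0 := by
    have := congrArg (eval 1) h
    simp at this
    simpa using this
  refine ⟨h0, ?_⟩
  have hd := congrArg (fun q => eval 1 (derivative q)) h
  simp [h0, derivative_X_pow] at hd
  linarith

/-- Each entry of the matrix defining `permPoly p` vanishes at `1`, to first order like
`(j + k) / 2` modulo `p`; so `permPoly p` is `(X - 1)^(p-1)` times a polynomial whose value at `1`
is the permanent of `[j + k]` modulo `p`. -/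
lemma permPoly_eq_X_sub_one_pow_mul {p : ℕ} [Fact p.Prime] (hp : 2 < p) (ho : Odd p) :
    ∃ Q : ℤ[X], permPoly p = (X - 1) ^ (p - 1) * Q ∧ ((eval 1 Q : ℤ) : ZMod p) = 2 := by
  obtain ⟨h0, hd⟩ := two_mul_eval_derivative_altPoly (by omega : 1 < p) ho
  set d := eval 1 (derivative (altPoly p)) with hd'
  have hex : ∀ m : ℕ, ∃ g : ℤ[X],
      (altPoly p).comp (X ^ m) = (X - 1) * g ∧ eval 1 g = d * m := by
    intro m
    have hroot : IsRoot ((altPoly p).comp (X ^ m)) 1 := by simp [IsRoot.def, eval_comp, h0]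
    obtain ⟨g, hg⟩ := dvd_iff_isRoot.mpr hroot
    refine ⟨g, by simpa using hg, ?_⟩
    have := congrArg (fun q => eval 1 (derivative q)) hg
    simp [derivative_comp, derivative_X_pow, eval_comp, ← hd'] at this
    linarith
  choose g hg hg1 using hex
  refine ⟨(Matrix.of fun j k : Fin (p - 1) => g (((j : ℕ) + 1) + ((k : ℕ) + 1))).permanent,
    ?_, ?_⟩
  · simp only [permPoly, Matrix.permanent, Matrix.of_apply, hg, Finset.prod_mul_distrib,
      Finset.prod_const, Finset.card_univ, Fintype.card_fin, ← Finset.mul_sum]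
  · have hd2 : (2 : ZMod p) * (d : ZMod p) = 1 := by
      have := congrArg (Int.cast : ℤ → ZMod p) hd
      simpa using this
    have hd0 : (d : ZMod p) ≠ 0 := by
      intro h; rw [h, mul_zero] at hd2; exact zero_ne_one hd2
    have hper := permanent_add_eq_two (p := p)
    simp only [Matrix.permanent, Matrix.of_apply] at hper ⊢
    simp only [eval_finsetSum, eval_prod, hg1, Int.cast_sum, Int.cast_prod, Int.cast_mul, Int.cast_pow,
      Finset.prod_mul_distrib, Finset.prod_const, Finset.card_univ, Fintype.card_fin,
      ← Finset.mul_sum, ZMod.pow_card_sub_one_eq_one hd0, one_mul, Int.cast_natCast, hper]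

lemma C_dvd_of_map_eq_zero {p : ℕ} (q : ℤ[X]) (h : q.map (Int.castRingHom (ZMod p)) = 0) :
    C (p : ℤ) ∣ q := by
  rw [C_dvd_iff_dvd_coeff]
  intro i
  have := congrArg (fun q => coeff q i) h
  simpa [CharP.intCast_eq_zero_iff (ZMod p) p] using this

/-- The quotient `h` has `h(1) = -1`: this replaces the congruence
`(ζ - 1)^(p-1) ≡ -p` modulo `(ζ - 1)^p` in the cyclotomic integers. -/
lemma X_sub_one_pow_eq_cyclotomic_add {p : ℕ} [Fact p.Prime] (hp : 2 < p) :
    ∃ h : ℤ[X], (X - 1) ^ (p - 1) = cyclotomic p ℤ + C (p : ℤ) * h ∧ eval 1 h = -1 := by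
  have hz : ((X - 1) ^ (p - 1) - cyclotomic p ℤ).map (Int.castRingHom (ZMod p)) = 0 := by
    have hX : (X - 1 : (ZMod p)[X]) ≠ 0 := by simpa using X_sub_C_ne_zero (1 : ZMod p)
    apply mul_right_cancel₀ hX
    simp only [Polynomial.map_sub, Polynomial.map_pow, map_X, Polynomial.map_one, map_cyclotomic]
    rw [sub_mul, ← pow_succ, Nat.sub_add_cancel (by omega), cyclotomic_prime_mul_X_sub_one,
      sub_pow_char, one_pow, sub_self, zero_mul]
  obtain ⟨h, hh⟩ := C_dvd_of_map_eq_zero _ hz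
  refine ⟨h, by rw [← hh]; ring, ?_⟩
  have := congrArg (eval 1) hh
  simp only [eval_sub, eval_pow, eval_X, eval_one, sub_self, eval_mul, eval_C,
    eval_one_cyclotomic_prime, zero_pow (show p - 1 ≠ 0 by omega)] at this
  have hp0 : (p : ℤ) ≠ 0 := by positivity
  apply mul_left_cancel₀ hp0
  linarith

lemma modEq_of_permPoly_eq {p : ℕ} [Fact p.Prime] (hp : 2 < p) (ho : Odd p) {S : ℤ[X]} {M : ℤ}
    (hM : permPoly p = cyclotomic p ℤ * S + C M) : (p : ℤ) ^ 2 ∣ M + 2 * p := by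
  obtain ⟨Q, hQ, hQ1⟩ := permPoly_eq_X_sub_one_pow_mul hp ho
  obtain ⟨h, hh, hh1⟩ := X_sub_one_pow_eq_cyclotomic_add hp
  have heq : cyclotomic p ℤ * (S - Q) = C (p : ℤ) * (h * Q) - C M := by
    rw [hQ, hh] at hM
    linear_combination -hM
  -- Modulo `p` the left side is a multiple of a monic polynomial of positive degree, and the
  -- right side is constant.
  have hz : (S - Q).map (Int.castRingHom (ZMod p)) = 0 := by
    by_contra hne
    have hmod := congrArg (Polynomial.map (Int.castRingHom (ZMod p))) heq
    rw [Polynomial.map_mul, map_cyclotomic] at hmod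
    have hnd := congrArg natDegree hmod
    rw [natDegree_mul (cyclotomic_ne_zero _ _) hne, natDegree_cyclotomic,
      Nat.totient_prime (Fact.out : p.Prime)] at hnd
    simp [Polynomial.map_sub, Polynomial.map_mul] at hnd
    omega
  obtain ⟨S', hS'⟩ := C_dvd_of_map_eq_zero _ hz
  obtain ⟨q, hq⟩ : (p : ℤ) ∣ eval 1 Q - 2 := by
    rw [← CharP.intCast_eq_zero_iff (ZMod p) p]
    push_cast
    rw [hQ1, sub_self]
  have h1 := congrArg (eval 1) heq
  simp only [hS', eval_mul, eval_sub, eval_C, eval_one_cyclotomic_prime, hh1] at h1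
  refine ⟨-(eval 1 S') - q, ?_⟩
  linear_combination h1 + (-(p : ℤ)) * hq

/-- For every odd integer `n > 1`, the real number
`T(n) := per [tan (π(j+k)/n)]_{1 ≤ j,k ≤ n-1}` is a rational integer, and for every odd
prime `p` the corresponding integer satisfies `T(p) ≡ (-1)^((p+1)/2) * 2p (mod p²)`. -/
theorem permanent_tan_pi_add_div_int_and_mod :
    (∀ n : ℕ, 1 < n → Odd n → ∃ m : ℤ,
      (Matrix.of fun j k : Fin (n - 1) =>
          Real.tan (Real.pi * ((((j : ℕ) + 1) + ((k : ℕ) + 1) : ℕ) : ℝ) / (n : ℝ))).permanent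
        = (m : ℝ)) ∧
    (∀ p : ℕ, p.Prime → Odd p → ∀ m : ℤ,
      (Matrix.of fun j k : Fin (p - 1) =>
          Real.tan (Real.pi * ((((j : ℕ) + 1) + ((k : ℕ) + 1) : ℕ) : ℝ) / (p : ℝ))).permanent
        = (m : ℝ) →
      m ≡ (-1) ^ ((p + 1) / 2) * 2 * (p : ℤ) [ZMOD (p : ℤ) ^ 2]) := by
  refine ⟨fun n h1 hn => ?_, fun p hp ho m hm => ?_⟩
  · obtain ⟨S, M, -, h⟩ := exists_permPoly_eq h1 hn
    exact ⟨_, h⟩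
  · have : Fact p.Prime := ⟨hp⟩
    have hp2 : 2 < p := by
      rcases hp.two_le.lt_or_eq with h | h
      · exact h
      · subst h; exact absurd ho (by decide)
    obtain ⟨S, M, hM, h⟩ := exists_permPoly_eq hp.one_lt ho
    have hmM : m = (-1) ^ ((p - 1) / 2) * M := by
      rw [h] at hm
      exact_mod_cast hm.symm
    obtain ⟨q, hq⟩ := modEq_of_permPoly_eq hp2 ho hM
    have hexp : (p + 1) / 2 = (p - 1) / 2 + 1 := by omega
    rw [Int.modEq_iff_dvd, hmM, hexp]
    refine ⟨-((-1) ^ ((p - 1) / 2) * q), ?_⟩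
    rw [pow_succ]
    linear_combination (-(-1 : ℤ) ^ ((p - 1) / 2)) * hq
end

section
/- Let n > 1 be an odd integer. Then c_n := 2^{(n-1)/2}·per[cos(2πjk/n)]_{1≤j,k≤(n−1)/2}, the permanent of the ((n−1)/2)×((n−1)/2) matrix with (j,k)-entry cos(2πjk/n) multiplied by 2^{(n-1)/2}, is a (rational) integer. Moreover, 2^{d_n}·2^{-(n-1)/2}·per[sec(2πjk/n)]_{1≤j,k≤(n−1)/2} is a (rational) integer, where d_n := max over τ ∈ S_{(n-1)/2} of the number of indices j with 1 ≤ j ≤ (n−1)/2 such that n divides j·τ(j). -/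
/-!
Write `m = (n - 1) / 2` and `ζ` for a primitive `n`-th root of unity in the cyclotomic field
`K = ℚ(ζ)`. Under the embedding `K → ℂ` with `ζ ↦ exp (2πi/n)`, the two numbers of the theorem are
the images of `per [ζ^(jk) + ζ^(-jk)]` and `2^d * per [(ζ^(jk) + ζ^(-jk))⁻¹]`. It is enough to see
that both are fixed by `Gal(K/ℚ)` and integral over `ℤ`, since `ℤ` is integrally closed
(`exists_int_of_isIntegral_of_fixed`).

*Galois invariance* (`map_permanent_eq`). An automorphism sends `ζ` to `ζ^a` with `a` prime to `n`.
Multiplication by `a` permutes `{1, …, m}` up to sign modulo `n` (`exists_perm_modEq_or_neg`), and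
the entries are invariant under `jk ↦ -jk`, so the automorphism only permutes the rows.

*Integrality.* This is clear for the first permanent. For the second, if `ω ≠ 1` and `ω^n = 1` with
`n` odd, then `1 + ω` has the inverse `∑_{i ≤ m} ω^(2i)`; hence an entry is integral unless
`n ∣ jk`, in which case it is `1/2` (`isIntegral_inv_add_inv`). The term of the permanent indexed
by `τ` contains at most `d` such halves, and these are absorbed by `2^d`.
-/

/-- For `a` prime to the odd number `n`, multiplication by `a` permutes the classes modulo `n`
of `1, …, (n - 1) / 2` up to sign. -/
lemma exists_perm_modEq_or_neg (n : ℕ) (hodd : Odd n) (a : ℤ) (ha : IsCoprime (n : ℤ) a) :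
    ∃ π : Equiv.Perm (Fin ((n - 1) / 2)), ∀ j : Fin ((n - 1) / 2),
      (n : ℤ) ∣ a * ((j : ℕ) + 1) - ((π j : ℕ) + 1) ∨
      (n : ℤ) ∣ a * ((j : ℕ) + 1) + ((π j : ℕ) + 1) := by
  obtain ⟨t, ht⟩ := hodd
  have small : ∀ z : ℤ, (n : ℤ) ∣ z → |z| < n → z = 0 :=
    fun z h1 h2 => Int.eq_zero_of_abs_lt_dvd h1 h2
  have key : ∀ j : Fin ((n - 1) / 2), ∃ k : Fin ((n - 1) / 2),
      (n : ℤ) ∣ a * ((j : ℕ) + 1) - ((k : ℕ) + 1) ∨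
      (n : ℤ) ∣ a * ((j : ℕ) + 1) + ((k : ℕ) + 1) := by
    intro j
    have hj := j.2
    have hn0 : (0 : ℤ) < n := by omega
    set r := (a * ((j : ℕ) + 1)) % (n : ℤ) with hr
    have h0 : 0 ≤ r := Int.emod_nonneg _ hn0.ne'
    have h1 : r < n := Int.emod_lt_of_pos _ hn0
    have h2 : (n : ℤ) ∣ a * ((j : ℕ) + 1) - r := Int.dvd_self_sub_emod
    have h3 : r ≠ 0 := by
      intro h
      rw [h, sub_zero] at h2
      have h4 := small _ (ha.dvd_of_dvd_mul_left h2) (by rw [abs_lt]; omega)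
      omega
    rcases le_or_gt r t with h | h
    · refine ⟨⟨(r - 1).toNat, by omega⟩, Or.inl ?_⟩
      have : (((r - 1).toNat : ℕ) : ℤ) + 1 = r := by omega
      simpa only [this] using h2
    · refine ⟨⟨(n - r - 1).toNat, by omega⟩, Or.inr ?_⟩
      have : (((n - r - 1).toNat : ℕ) : ℤ) + 1 = n - r := by omega
      simp only [this]
      have := dvd_add h2 (dvd_refl (n : ℤ))
      exact this.trans (dvd_of_eq (by ring))
  choose g hg using key
  have inj : Function.Injective g := by
    intro x y hxy
    have hx := hg x
    have hy := hg y
    rw [← hxy] at hy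
    have hx2 := x.2
    have hy2 := y.2
    have main : (n : ℤ) ∣ a * ((x : ℤ) - y) ∨ (n : ℤ) ∣ a * ((x : ℤ) + y + 2) := by
      rcases hx with hx | hx <;> rcases hy with hy | hy
      · left; exact (dvd_sub hx hy).trans (dvd_of_eq (by ring))
      · right; exact (dvd_add hx hy).trans (dvd_of_eq (by ring))
      · right; exact (dvd_add hx hy).trans (dvd_of_eq (by ring))
      · left; exact (dvd_sub hx hy).trans (dvd_of_eq (by ring))
    rcases main with h | h
    · have := small _ (ha.dvd_of_dvd_mul_left h) (by rw [abs_lt]; omega)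
      ext; omega
    · have := small _ (ha.dvd_of_dvd_mul_left h) (by rw [abs_lt]; omega)
      omega
  exact ⟨Equiv.ofBijective g (Finite.injective_iff_bijective.mp inj), hg⟩

/-- A field endomorphism only permutes the rows of `[F (ζ^(jk))]`, `1 ≤ j, k ≤ (n - 1) / 2`,
provided that it commutes with `F` and that `F` is invariant under inversion. -/
lemma map_permanent_eq {K : Type*} [Field K] {n : ℕ} (hn : 1 < n) (hodd : Odd n) {ζ : K}
    (hζ : IsPrimitiveRoot ζ n) (F : K → K) (hF : ∀ x, F x⁻¹ = F x) (σ : K →+* K)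
    (hσ : ∀ x, σ (F x) = F (σ x)) :
    σ (Matrix.of fun j k : Fin ((n - 1) / 2) =>
        F (ζ ^ (((j : ℕ) + 1) * ((k : ℕ) + 1)))).permanent =
      (Matrix.of fun j k : Fin ((n - 1) / 2) =>
        F (ζ ^ (((j : ℕ) + 1) * ((k : ℕ) + 1)))).permanent := by
  have : NeZero n := ⟨by omega⟩
  have hσζ : IsPrimitiveRoot (σ ζ) n := hζ.map_of_injective σ.injective
  obtain ⟨a, -, hcop, ha⟩ := hζ.isPrimitiveRoot_iff.mp hσζ
  obtain ⟨π, hπ⟩ := exists_perm_modEq_or_neg n hodd a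
    (Nat.isCoprime_iff_coprime.mpr hcop.symm)
  conv_rhs => rw [← Matrix.permanent_permute_cols π (Matrix.of fun j k : Fin ((n - 1) / 2) =>
        F (ζ ^ (((j : ℕ) + 1) * ((k : ℕ) + 1))))]
  simp only [Matrix.permanent, map_sum, map_prod, Matrix.of_apply, Matrix.submatrix_apply, id, hσ,
    map_pow, ← ha]
  refine Finset.sum_congr rfl fun τ _ => Finset.prod_congr rfl fun k _ => ?_
  have hζ0 : ζ ≠ 0 := hζ.ne_zero (by omega)
  rcases hπ (τ k) with h | h
  · congr 1
    rw [← zpow_natCast ζ a, ← zpow_natCast, ← zpow_natCast, ← zpow_mul, ← div_eq_one_iff_eq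
      (zpow_ne_zero _ hζ0), ← zpow_sub₀ hζ0, hζ.zpow_eq_one_iff_dvd]
    exact (h.mul_right ((k : ℤ) + 1)).trans (dvd_of_eq (by push_cast; ring))
  · rw [← hF]
    congr 1
    rw [← zpow_natCast ζ a, ← zpow_natCast, ← zpow_natCast, ← zpow_mul, ← zpow_neg,
      ← div_eq_one_iff_eq (zpow_ne_zero _ hζ0), ← zpow_sub₀ hζ0, hζ.zpow_eq_one_iff_dvd,
      ← dvd_neg]
    exact (h.mul_right ((k : ℤ) + 1)).trans (dvd_of_eq (by push_cast; ring))

lemma exists_int_of_isIntegral_of_fixed {K : Type*} [Field K] [Algebra ℚ K] [IsGalois ℚ K]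
    [FiniteDimensional ℚ K] (x : K) (hx : IsIntegral ℤ x) (hfix : ∀ σ : K ≃ₐ[ℚ] K, σ x = x) :
    ∃ a : ℤ, x = a := by
  have hbot := (IsGalois.mem_bot_iff_fixed x).mpr hfix
  obtain ⟨q, rfl⟩ := IntermediateField.mem_bot.mp hbot
  have hq : IsIntegral ℤ q :=
    (isIntegral_algebraMap_iff (algebraMap ℚ K).injective).mp hx
  obtain ⟨a, rfl⟩ := IsIntegrallyClosed.isIntegral_iff.mp hq
  exact ⟨a, by simp⟩

/-- For `y` of odd order dividing `n`, the number `(y + y⁻¹)⁻¹` is integral unless `y = 1`. -/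
lemma isIntegral_inv_add_inv {K : Type*} [Field K] {n : ℕ} (hodd : Odd n) {y : K}
    (hy : y ^ n = 1) (hy1 : y ≠ 1) : IsIntegral ℤ (y + y⁻¹)⁻¹ := by
  obtain ⟨t, ht⟩ := hodd
  have hy0 : y ≠ 0 := by
    rintro rfl
    rw [zero_pow (by omega)] at hy
    exact zero_ne_one hy
  have hyint : IsIntegral ℤ y := IsIntegral.of_pow (n := n) (by omega) (hy ▸ isIntegral_one)
  -- `y² ≠ 1`, as the order of `y` is odd.
  have hy2 : y ^ 2 ≠ 1 := by
    intro h
    rw [ht, pow_succ, pow_mul, h, one_pow, one_mul] at hy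
    exact hy1 hy
  have hinv : (y + y⁻¹) * (y * ∑ i ∈ Finset.range (t + 1), ((y ^ 2) ^ 2) ^ i) = 1 := by
    have hg := mul_geom_sum ((y ^ 2) ^ 2) (t + 1)
    have hp : ((y ^ 2) ^ 2) ^ (t + 1) = y ^ 2 := by
      calc ((y ^ 2) ^ 2) ^ (t + 1) = (y ^ n) ^ 2 * y ^ 2 := by rw [ht]; ring
        _ = y ^ 2 := by rw [hy]; ring
    rw [hp] at hg
    have hs : (y ^ 2 + 1) * ∑ i ∈ Finset.range (t + 1), ((y ^ 2) ^ 2) ^ i = 1 := by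
      apply mul_left_cancel₀ (sub_ne_zero.mpr hy2)
      rw [mul_one]
      linear_combination hg
    rw [← hs]
    field_simp
  rw [inv_eq_of_mul_eq_one_right hinv]
  exact hyint.mul (IsIntegral.sum _ fun i _ => ((hyint.pow 2).pow 2).pow i)

/-- Some finite Galois extension `K` of `ℚ` (the `n`-th cyclotomic field) contains a primitive `n`-th
root of unity `ζ` and has an embedding into `ℂ` with `ζ ↦ exp (2πi/n)`. Only these properties of
`K` are used, so the field itself is kept abstract. -/
lemma exists_embedding (n : ℕ) (hn : 1 < n) :
    ∃ (K : Type) (_ : Field K) (_ : Algebra ℚ K) (_ : IsGalois ℚ K) (_ : FiniteDimensional ℚ K)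
      (ζ : K) (f : K →+* ℂ), IsPrimitiveRoot ζ n ∧
      f ζ = Complex.exp (2 * Real.pi * Complex.I / n) := by
  have : NeZero n := ⟨by omega⟩
  have : NeZero (n : ℚ) := NeZero.charZero
  have hcyc : IsCyclotomicExtension {n} ℚ (CyclotomicField n ℚ) :=
    CyclotomicField.isCyclotomicExtension n ℚ
  have hC := Complex.isPrimitiveRoot_exp n (by omega)
  have hfin : FiniteDimensional ℚ (CyclotomicField n ℚ) :=
    IsCyclotomicExtension.finiteDimensional {n} ℚ _
  let f : CyclotomicField n ℚ →ₐ[ℚ] ℂ := IsAlgClosed.lift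
  have hz := IsCyclotomicExtension.zeta_spec n ℚ (CyclotomicField n ℚ)
  have hfz := hz.map_of_injective f.toRingHom.injective
  obtain ⟨i, -, hi⟩ := hfz.eq_pow_of_pow_eq_one hC.pow_eq_one
  refine ⟨CyclotomicField n ℚ, inferInstance, inferInstance,
    IsCyclotomicExtension.isGalois {n} ℚ _, hfin,
    IsCyclotomicExtension.zeta n ℚ (CyclotomicField n ℚ) ^ i, f.toRingHom, ?_, ?_⟩
  · refine IsPrimitiveRoot.of_map_of_injective (f := f.toRingHom) ?_ f.toRingHom.injective
    rwa [map_pow, hi]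
  · rw [map_pow, hi]

lemma embedding_pow_add_inv {K : Type*} [Field K] {n : ℕ} {ζ : K} (f : K →+* ℂ)
    (hf : f ζ = Complex.exp (2 * Real.pi * Complex.I / n)) (l : ℕ) :
    f (ζ ^ l + (ζ ^ l)⁻¹) = ((2 * Real.cos (2 * Real.pi * (l : ℝ) / n) : ℝ) : ℂ) := by
  rw [map_add, map_inv₀, map_pow, hf, ← Complex.exp_nat_mul, ← Complex.exp_neg]
  push_cast
  rw [Complex.two_cos]
  congr 2 <;> ring

/-- Let `n > 1` be odd. Then `c_n := 2^((n-1)/2) * per [cos (2πjk/n)]_{1 ≤ j,k ≤ (n-1)/2}`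
is a rational integer, and `2^(d_n) * 2^(-(n-1)/2) * per [sec (2πjk/n)]_{1 ≤ j,k ≤ (n-1)/2}`
is a rational integer, where `d_n` is the maximum over permutations `τ` of `{1, …, (n-1)/2}`
of the number of indices `j` with `n ∣ j * τ(j)`. -/
theorem permanent_cos_sec_two_pi_mul_div_int (n : ℕ) (hn : 1 < n) (hodd : Odd n) :
    (∃ a : ℤ, (2 : ℝ) ^ ((n - 1) / 2) *
        (Matrix.of fun j k : Fin ((n - 1) / 2) =>
          Real.cos (2 * Real.pi * ((((j : ℕ) + 1) * ((k : ℕ) + 1) : ℕ) : ℝ) / (n : ℝ))).permanent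
        = (a : ℝ)) ∧
    (∃ b : ℤ, (2 : ℝ) ^
          (Finset.univ.sup fun τ : Equiv.Perm (Fin ((n - 1) / 2)) =>
            (Finset.univ.filter fun j : Fin ((n - 1) / 2) =>
              n ∣ ((j : ℕ) + 1) * ((τ j : ℕ) + 1)).card)
        * ((2 : ℝ) ^ ((n - 1) / 2))⁻¹ *
        (Matrix.of fun j k : Fin ((n - 1) / 2) =>
          (Real.cos (2 * Real.pi * ((((j : ℕ) + 1) * ((k : ℕ) + 1) : ℕ) : ℝ) / (n : ℝ)))⁻¹).permanent
        = (b : ℝ)) := by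
  have : NeZero n := ⟨by omega⟩
  obtain ⟨K, _, _, _, _, ζ, f, hζ, hf⟩ := exists_embedding n hn
  have : CharZero K := algebraRat.charZero K
  have hζint : IsIntegral ℤ ζ := hζ.isIntegral (by omega)
  have hpow : ∀ l : ℕ, (ζ ^ l) ^ n = 1 := fun l => by
    rw [← pow_mul, mul_comm, pow_mul, hζ.pow_eq_one, one_pow]
  constructor
  · obtain ⟨a, ha⟩ := exists_int_of_isIntegral_of_fixed
      (Matrix.of fun j k : Fin ((n - 1) / 2) =>
        (fun x : K => x + x⁻¹)
          (ζ ^ (((j : ℕ) + 1) * ((k : ℕ) + 1)))).permanent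
      (by
        refine IsIntegral.sum _ fun τ _ => IsIntegral.prod _ fun k _ => ?_
        have hinv : ∀ l : ℕ, IsIntegral ℤ (ζ ^ l)⁻¹ := fun l =>
          IsIntegral.of_pow (n := n) (by omega) (by
            rw [inv_pow, hpow, inv_one]; exact isIntegral_one)
        exact (hζint.pow _).add (hinv _))
      (fun σ => by
        have hper := map_permanent_eq hn hodd hζ
          (fun x : K => x + x⁻¹) (fun x => by simp [add_comm])
          (σ : K →+* K) (fun x => by simp)
        exact hper)
    refine ⟨a, ?_⟩
    have hfa := congrArg f ha
    simp only [Matrix.permanent, map_sum, map_prod, Matrix.of_apply,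
      embedding_pow_add_inv f hf, map_intCast] at hfa
    have hreal : ((2 : ℝ) ^ ((n - 1) / 2) * (Matrix.of fun j k : Fin ((n - 1) / 2) =>
        Real.cos (2 * Real.pi * ((((j : ℕ) + 1) * ((k : ℕ) + 1) : ℕ) : ℝ) / (n : ℝ))).permanent)
        = ∑ τ : Equiv.Perm (Fin ((n - 1) / 2)), ∏ k : Fin ((n - 1) / 2), (2 *
          Real.cos (2 * Real.pi *
            ((((τ k : ℕ) + 1) * ((k : ℕ) + 1) : ℕ) : ℝ) / (n : ℝ))) := by
      simp [Matrix.permanent, Finset.mul_sum, Finset.prod_mul_distrib]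
    rw [hreal]
    exact_mod_cast hfa
  · set d := Finset.univ.sup fun τ : Equiv.Perm (Fin ((n - 1) / 2)) =>
            (Finset.univ.filter fun j : Fin ((n - 1) / 2) =>
              n ∣ ((j : ℕ) + 1) * ((τ j : ℕ) + 1)).card with hd
    obtain ⟨b, hb⟩ := exists_int_of_isIntegral_of_fixed
      (2 ^ d * (Matrix.of fun j k : Fin ((n - 1) / 2) =>
        (fun x : K => (x + x⁻¹)⁻¹)
          (ζ ^ (((j : ℕ) + 1) * ((k : ℕ) + 1)))).permanent)
      (by
        have h2 : IsIntegral ℤ (2 : K) := by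
          simpa using (isIntegral_algebraMap : IsIntegral ℤ
            (algebraMap ℤ (K) 2))
        rw [Matrix.permanent, Finset.mul_sum]
        refine IsIntegral.sum _ fun τ _ => ?_
        have hle : (Finset.univ.filter fun j : Fin ((n - 1) / 2) =>
              n ∣ ((j : ℕ) + 1) * ((τ j : ℕ) + 1)).card ≤ d :=
          Finset.le_sup (f := fun τ : Equiv.Perm (Fin ((n - 1) / 2)) =>
            (Finset.univ.filter fun j : Fin ((n - 1) / 2) =>
              n ∣ ((j : ℕ) + 1) * ((τ j : ℕ) + 1)).card) (Finset.mem_univ τ)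
        -- Of the `d` factors `2`, one is assigned to each entry `1/2`; the others remain in front.
        rw [← Nat.sub_add_cancel hle, pow_add, mul_assoc]
        refine (h2.pow _).mul ?_
        rw [← Finset.prod_const, Finset.prod_filter, ← Finset.prod_mul_distrib]
        refine IsIntegral.prod _ fun k _ => ?_
        simp only [Matrix.of_apply]
        rw [mul_comm ((τ k : ℕ) + 1)]
        split_ifs with h
        · rw [(hζ.pow_eq_one_iff_dvd _).mpr h, inv_one, one_add_one_eq_two,
            mul_inv_cancel₀ two_ne_zero]
          exact isIntegral_one
        · rw [one_mul]
          exact isIntegral_inv_add_inv hodd (hpow _)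
            (fun h' => h ((hζ.pow_eq_one_iff_dvd _).mp h')))
      (fun σ => by
        have hper := map_permanent_eq hn hodd hζ
          (fun x : K => (x + x⁻¹)⁻¹) (fun x => by simp [add_comm])
          (σ : K →+* K) (fun x => by simp)
        rw [map_mul, map_pow, map_ofNat]
        exact congrArg _ hper)
    refine ⟨b, ?_⟩
    have hfb := congrArg f hb
    simp only [Matrix.permanent, map_mul, map_pow, map_ofNat, map_sum, map_prod, Matrix.of_apply,
      map_inv₀ f (_ + _), embedding_pow_add_inv f hf, map_intCast] at hfb
    have hreal : ((2 : ℝ) ^ ((n - 1) / 2))⁻¹ * (Matrix.of fun j k : Fin ((n - 1) / 2) =>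
        (Real.cos (2 * Real.pi *
          ((((j : ℕ) + 1) * ((k : ℕ) + 1) : ℕ) : ℝ) / (n : ℝ)))⁻¹).permanent
        = ∑ τ : Equiv.Perm (Fin ((n - 1) / 2)), ∏ k : Fin ((n - 1) / 2), (2 *
          Real.cos (2 * Real.pi *
            ((((τ k : ℕ) + 1) * ((k : ℕ) + 1) : ℕ) : ℝ) / (n : ℝ)))⁻¹ := by
      simp [Matrix.permanent, Finset.mul_sum, Finset.prod_mul_distrib, mul_comm]
    rw [mul_assoc, hreal]
    exact_mod_cast hfb
end
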